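/- arXiv:2103.08027 — 2 statements merged into one kernel-verified Lean document; each statement's English description precedes it below -/
import Mathlib

section
/- Generalized Faulhaber formula for the sum of inverse square roots: For every natural number n ≥ 1, the series ∑_{k=1}^{∞} (−1)^k (∑_{l=1}^{k} ((2l−1)!!/(2^l (l+1)!)) B_{l+1} S_k^{(1)}(l)) / ((n+1)(n+2)⋯(n+k)) converges absolutely, and ∑_{k=1}^{n} 1/√k = 2√n + ζ(1/2) + 1/(2√n) + (1/√n) ∑_{k=1}^{∞} (−1)^k (∑_{l=1}^{k} ((2l−1)!!/(2^l (l+1)!)) B_{l+1} S_k^{(1)}(l)) / ((n+1)(n+2)⋯(n+k)). -/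
open Finset in
/-- Unsigned Stirling numbers of the first kind, via the rising-factorial recurrence:
`z(z+1)⋯(z+k−1) = ∑ l, stirling1Unsigned k l * z^l`. -/
def stirling1Unsigned : ℕ → ℕ → ℕ
  | 0, 0 => 1
  | 0, _ + 1 => 0
  | k + 1, 0 => k * stirling1Unsigned k 0
  | k + 1, l + 1 => stirling1Unsigned k l + k * stirling1Unsigned k (l + 1)

/-- The Stirling numbers of the first kind `S_k^{(1)}(l)` of the paper, defined by
`z(z+1)⋯(z+k−1) = (−1)^k ∑_{l=0}^k (−1)^l S_k^{(1)}(l) z^l`, i.e.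
`S_k^{(1)}(l) = (−1)^{k−l}` times the coefficient of `z^l` in the rising factorial. -/
def S1 (k l : ℕ) : ℤ := (-1) ^ (k + l) * stirling1Unsigned k l

/-- The `n`-th Bernoulli polynomial `B_n(x) = ∑_{k=0}^n C(n,k) B_k x^{n−k}`,
with `B_1 = −1/2`. -/
noncomputable def bernPoly (n : ℕ) (x : ℝ) : ℝ :=
  ∑ k ∈ Finset.range (n + 1), (n.choose k : ℝ) * (bernoulli k : ℝ) * x ^ (n - k)

/-- The generalized binomial coefficient `C(w,k) = w(w−1)⋯(w−k+1)/k!`. -/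
noncomputable def cchoose (w : ℂ) (k : ℕ) : ℂ :=
  (∏ i ∈ Finset.range k, (w - i)) / (k.factorial : ℂ)

/-- The rising product `(z+1)(z+2)⋯(z+k)`. -/
noncomputable def risingProd (z : ℂ) (k : ℕ) : ℂ :=
  ∏ i ∈ Finset.range k, (z + i + 1)

/-- The rising product `(x+1)(x+2)⋯(x+k)` over the reals. -/
noncomputable def risingProdR (x : ℝ) (k : ℕ) : ℝ :=
  ∏ i ∈ Finset.range k, (x + i + 1)

/-- The digamma function `ψ(z) = Γ′(z)/Γ(z)`. -/
noncomputable def digamma (z : ℂ) : ℂ := deriv Complex.Gamma z / Complex.Gamma z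


open Complex in
lemma zh_bound (n : ℝ) (hn : 1 ≤ n) (s : ℂ) (hs : 0 < s.re) :
    ‖(s - 1) * (n : ℂ) ^ (-s) + ((n + 1 : ℝ) : ℂ) ^ (1 - s) - (n : ℂ) ^ (1 - s)‖
      ≤ ‖s - 1‖ * (‖s‖ * n ^ (-s.re - 1)) := by
  have hn0 : 0 < n := by linarith
  -- derivative facts
  have hd (r : ℂ) (x : ℝ) (hx : 0 < x) :
      HasDerivAt (fun y : ℝ => (y : ℂ) ^ r) (r * (x : ℂ) ^ (r - 1)) x := by
    by_cases hr : r = 0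
    · subst hr
      simpa using (hasDerivAt_const x (1 : ℂ))
    · exact hasDerivAt_ofReal_cpow_const hx.ne' hr
  have h1 : ∀ x ∈ Set.Icc n (n + 1), ‖(x : ℂ) ^ (-s) - (n : ℂ) ^ (-s)‖ ≤
      ‖s‖ * n ^ (-s.re - 1) := by
    intro x hx
    have := Convex.norm_image_sub_le_of_norm_hasDerivWithin_le (f := fun y : ℝ => (y : ℂ) ^ (-s))
      (f' := fun y => (-s) * (y : ℂ) ^ (-s - 1)) (s := Set.Icc n (n + 1))
      (C := ‖s‖ * n ^ (-s.re - 1)) (x := n) (y := x)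
      (fun y hy => (hd (-s) y (by linarith [hy.1])).hasDerivWithinAt) ?_ (convex_Icc _ _)
      ⟨le_rfl, by linarith⟩ hx
    · refine this.trans ?_
      have h2 : ‖x - n‖ ≤ 1 := by
        rw [Real.norm_eq_abs, abs_le]; constructor <;> linarith [hx.1, hx.2]
      have h3 : 0 ≤ ‖s‖ * n ^ (-s.re - 1) := by positivity
      nlinarith
    · intro y hy
      have hy0 : 0 < y := by linarith [hy.1]
      rw [norm_mul, norm_neg, norm_cpow_eq_rpow_re_of_pos hy0]
      gcongr
      simp only [sub_re, neg_re, one_re]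
      exact Real.rpow_le_rpow_of_nonpos hn0 hy.1 (by linarith)
  have := Convex.norm_image_sub_le_of_norm_hasDerivWithin_le
      (f := fun y : ℝ => (y : ℂ) ^ (1 - s) - (y : ℂ) * ((1 - s) * (n : ℂ) ^ (-s)))
      (f' := fun y => (1 - s) * (y : ℂ) ^ (1 - s - 1) - 1 * ((1 - s) * (n : ℂ) ^ (-s)))
      (s := Set.Icc n (n + 1))
      (C := ‖s - 1‖ * (‖s‖ * n ^ (-s.re - 1))) (x := n) (y := n + 1)
      (fun y hy => ((hd (1 - s) y (by linarith [hy.1])).sub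
        ((HasDerivAt.ofReal_comp (hasDerivAt_id y)).mul_const _)).hasDerivWithinAt) ?_ (convex_Icc _ _)
      ⟨le_rfl, by linarith⟩ ⟨by linarith, le_rfl⟩
  · simp only [add_sub_cancel_left, norm_one, mul_one] at this
    refine le_of_eq_of_le (congrArg norm ?_) this
    push_cast
    ring
  · intro y hy
    have e : (1 - s) * (y : ℂ) ^ (1 - s - 1) - 1 * ((1 - s) * (n : ℂ) ^ (-s)) =
      (1 - s) * ((y : ℂ) ^ (-s) - (n : ℂ) ^ (-s)) := by
      rw [show 1 - s - 1 = -s by ring]; ring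
    rw [e, norm_mul, norm_sub_rev 1 s]
    gcongr
    exact h1 y hy

noncomputable def zhTerm (n : ℕ) (s : ℂ) : ℂ :=
  (s - 1) * ((n + 1 : ℕ) : ℂ) ^ (-s) + ((n + 2 : ℕ) : ℂ) ^ (1 - s) - ((n + 1 : ℕ) : ℂ) ^ (1 - s)

lemma zhTerm_bound (n : ℕ) (s : ℂ) (hs : 0 < s.re) :
    ‖zhTerm n s‖ ≤ ‖s - 1‖ * (‖s‖ * ((n + 1 : ℕ) : ℝ) ^ (-s.re - 1)) := by
  have := zh_bound (n + 1 : ℕ) (by simp) s hs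
  convert this using 2
  unfold zhTerm
  push_cast
  congr 2
  ring_nf

lemma zhTerm_summable (s : ℂ) (hs : 0 < s.re) : Summable (fun n => zhTerm n s) := by
  refine Summable.of_norm_bounded (g := fun n : ℕ => ‖s - 1‖ * (‖s‖ * ((n + 1 : ℕ) : ℝ) ^ (-s.re - 1)))
    ?_ (fun n => zhTerm_bound n s hs)
  refine Summable.mul_left _ (Summable.mul_left _ ?_)
  exact (summable_nat_add_iff 1).mpr (Real.summable_nat_rpow.mpr (by linarith))

lemma zhTerm_diff (n : ℕ) : Differentiable ℂ (zhTerm n) := by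
  have h1 : ((n + 1 : ℕ) : ℂ) ≠ 0 := by exact_mod_cast Nat.succ_ne_zero n
  have h2 : ((n + 2 : ℕ) : ℂ) ≠ 0 := by exact_mod_cast Nat.succ_ne_zero (n+1)
  intro s
  unfold zhTerm
  refine DifferentiableAt.sub (DifferentiableAt.add (DifferentiableAt.mul (by fun_prop) ?_) ?_) ?_
  · exact DifferentiableAt.const_cpow (by fun_prop) (Or.inl h1)
  · exact DifferentiableAt.const_cpow (by fun_prop) (Or.inl h2)
  · exact DifferentiableAt.const_cpow (by fun_prop) (Or.inl h1)

lemma zhTerm_partial (N : ℕ) (s : ℂ) : ∑ n ∈ Finset.range N, zhTerm n s =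
    (s - 1) * ∑ n ∈ Finset.range N, ((n + 1 : ℕ) : ℂ) ^ (-s) + ((N + 1 : ℕ) : ℂ) ^ (1 - s) - 1 := by
  induction N with
  | zero => simp
  | succ N ih =>
    rw [Finset.sum_range_succ, ih, Finset.sum_range_succ, zhTerm]
    ring

lemma zhTsum_diff : DifferentiableOn ℂ (fun s => ∑' n, zhTerm n s) {s | 0 < s.re} := by
  intro s hs
  simp only [Set.mem_ofPred_eq] at hs
  set U : Set ℂ := {z | s.re / 2 < z.re} ∩ Metric.ball s 1 with hU
  have hUo : IsOpen U := (isOpen_lt continuous_const Complex.continuous_re).inter Metric.isOpen_ball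
  have hsU : s ∈ U := ⟨by simp only [Set.mem_ofPred_eq]; linarith, by simp⟩
  have := Complex.differentiableOn_tsum_of_summable_norm (F := zhTerm) (U := U)
    (u := fun n : ℕ => (‖s‖ + 2) * ((‖s‖ + 2) * ((n + 1 : ℕ) : ℝ) ^ (-(s.re/2) - 1))) ?_
    (fun i => (zhTerm_diff i).differentiableOn) hUo ?_
  · exact (this.differentiableAt (hUo.mem_nhds hsU)).differentiableWithinAt
  · refine Summable.mul_left _ (Summable.mul_left _ ?_)
    exact (summable_nat_add_iff 1).mpr (Real.summable_nat_rpow.mpr (by linarith))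
  · intro n w hw
    have hw1 : s.re / 2 < w.re := hw.1
    have hw2 : ‖w - s‖ < 1 := by simpa [dist_eq_norm] using hw.2
    have h3 : ‖w‖ ≤ ‖s‖ + 1 := by
      have := norm_add_le (w - s) s
      simp only [sub_add_cancel] at this; linarith
    have h4 : ‖w - 1‖ ≤ ‖s‖ + 2 := by
      have := norm_sub_le w 1
      simp only [norm_one] at this; linarith
    refine (zhTerm_bound n w (by linarith)).trans ?_
    gcongr
    · linarith
    · simp
    
lemma zh_eq_large (s : ℂ) (hs : 1 < s.re) : ∑' n, zhTerm n s = riemannZeta₁ s - 1 := by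
  have h1 := (zhTerm_summable s (by linarith)).hasSum.tendsto_sum_nat
  simp_rw [zhTerm_partial] at h1
  have h2 : Summable (fun n : ℕ => ((n + 1 : ℕ) : ℂ) ^ (-s)) := by
    have := (summable_nat_add_iff 1).mpr (Complex.summable_one_div_nat_cpow.mpr hs)
    refine this.congr (fun n => ?_)
    rw [Complex.cpow_neg, one_div]
  have h3 : Filter.Tendsto (fun N : ℕ => ((N + 1 : ℕ) : ℂ) ^ (1 - s)) Filter.atTop (nhds 0) := by
    rw [tendsto_zero_iff_norm_tendsto_zero]
    have : ∀ N : ℕ, ‖((N + 1 : ℕ) : ℂ) ^ (1 - s)‖ = ((N + 1 : ℕ) : ℝ) ^ (-(s.re - 1)) := by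
      intro N
      rw [Complex.norm_natCast_cpow_of_pos (Nat.succ_pos N)]
      simp
    simp_rw [this]
    exact (tendsto_rpow_neg_atTop (by linarith)).comp
      (tendsto_natCast_atTop_atTop.comp (Filter.tendsto_add_atTop_nat 1))
  have h4 := ((h2.hasSum.tendsto_sum_nat.const_mul (s - 1)).add h3).sub_const 1
  rw [tendsto_nhds_unique h1 h4]
  have hne : s ≠ 1 := by rintro rfl; simp at hs
  have h5 := riemannZeta_eq_inv_sub_mul hne
  rw [zeta_eq_tsum_one_div_nat_add_one_cpow hs] at h5
  have : ∑' n : ℕ, ((n + 1 : ℕ) : ℂ) ^ (-s) = ∑' n : ℕ, 1 / ((n : ℂ) + 1) ^ s := by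
    congr 1; ext n; rw [Complex.cpow_neg, one_div]; push_cast; rfl
  rw [this, h5]
  have : s - 1 ≠ 0 := sub_ne_zero.mpr hne
  field_simp
  ring

lemma zh_eq (s : ℂ) (hs : 0 < s.re) : ∑' n, zhTerm n s = riemannZeta₁ s - 1 := by
  have hopen : IsOpen {s : ℂ | 0 < s.re} := isOpen_lt continuous_const Complex.continuous_re
  have hconv : Convex ℝ {s : ℂ | 0 < s.re} := convex_halfSpace_re_gt 0
  have h1 := zhTsum_diff.analyticOnNhd hopen
  have h2 : AnalyticOnNhd ℂ (fun s => riemannZeta₁ s - 1) {s : ℂ | 0 < s.re} :=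
    (differentiable_riemannZeta₁.sub_const 1).differentiableOn.analyticOnNhd hopen
  refine h1.eqOn_of_preconnected_of_eventuallyEq h2 hconv.isPreconnected (z₀ := 2)
    (by simp) ?_ hs
  have : {s : ℂ | 1 < s.re} ∈ nhds (2 : ℂ) :=
    (isOpen_lt continuous_const Complex.continuous_re).mem_nhds (by simp)
  filter_upwards [this] with z hz
  exact zh_eq_large z hz

lemma zeta_half_lim : Filter.Tendsto
    (fun N : ℕ => (((∑ k ∈ Finset.Icc 1 N, 1 / Real.sqrt k) - 2 * Real.sqrt N : ℝ) : ℂ))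
    Filter.atTop (nhds (riemannZeta (1 / 2))) := by
  have h1 := (zhTerm_summable (1/2) (by norm_num)).hasSum.tendsto_sum_nat
  rw [zh_eq _ (by norm_num)] at h1
  have h5 := riemannZeta_eq_inv_sub_mul (s := 1/2) (by norm_num)
  have hz : riemannZeta₁ (1/2) - 1 = -(1/2) * riemannZeta (1/2) - 1 := by
    rw [h5]; norm_num; ring
  rw [hz] at h1
  have h2 := ((h1.add_const 1).const_mul (-2))
  have h3 : Filter.Tendsto (fun N : ℕ => ((2 * (Real.sqrt (N + 1) - Real.sqrt N) : ℝ) : ℂ))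
      Filter.atTop (nhds 0) := by
    have : Filter.Tendsto (fun N : ℕ => (2 * (Real.sqrt (N + 1) - Real.sqrt N) : ℝ)) Filter.atTop (nhds 0) := by
      refine squeeze_zero' (g := fun N : ℕ => 1 / Real.sqrt N) ?_ ?_ ?_
      · refine Filter.Eventually.of_forall (fun N => ?_)
        have := Real.sqrt_le_sqrt (show (N:ℝ) ≤ N + 1 by linarith)
        linarith
      · filter_upwards [Filter.eventually_gt_atTop 0] with N hN
        have hN' : (0:ℝ) < N := by exact_mod_cast hN
        have ha := Real.sqrt_pos.mpr hN'
        have hb := Real.sq_sqrt hN'.le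
        have hc := Real.sq_sqrt (show (0:ℝ) ≤ N + 1 by linarith)
        rw [le_div_iff₀ ha]
        nlinarith [sq_nonneg (Real.sqrt (N+1) - Real.sqrt N)]
      · refine tendsto_const_nhds.div_atTop (Real.tendsto_sqrt_atTop.comp tendsto_natCast_atTop_atTop)
    exact_mod_cast (Complex.continuous_ofReal.tendsto 0).comp this
  have h4 := h2.add h3
  have e : -2 * (-(1 / 2) * riemannZeta (1 / 2) - 1 + 1) + 0 = riemannZeta (1/2) := by ring
  rw [e] at h4
  refine h4.congr (fun N => ?_)
  rw [zhTerm_partial]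
  have e1 : ∑ n ∈ Finset.range N, ((n + 1 : ℕ) : ℂ) ^ (-(1/2) : ℂ) =
      ((∑ k ∈ Finset.Icc 1 N, 1 / Real.sqrt k : ℝ) : ℂ) := by
    rw [Finset.range_eq_Ico, Finset.sum_Ico_add' (fun n : ℕ => (n : ℂ) ^ (-(1/2) : ℂ)) 0 N 1]
    push_cast
    refine Finset.sum_congr (by ext; simp) (fun k hk => ?_)
    rw [Real.sqrt_eq_rpow, Complex.cpow_neg, Complex.ofReal_cpow (by positivity)]
    simp
  have e2 : ((N + 1 : ℕ) : ℂ) ^ (1 - 1/2 : ℂ) = ((Real.sqrt (N + 1) : ℝ) : ℂ) := by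
    rw [Real.sqrt_eq_rpow, Complex.ofReal_cpow (by positivity)]
    push_cast
    norm_num
  rw [e1, e2]
  push_cast
  ring

open MeasureTheory Set in
lemma gam_int (v : ℝ) (hv : 0 < v) :
    ∫ s in Ioi (0:ℝ), s ^ (-(1/2) : ℝ) * Real.exp (-(v * s)) = Real.sqrt Real.pi / Real.sqrt v := by
  have := Real.integral_rpow_mul_exp_neg_mul_Ioi (a := 1/2) (r := v) (by norm_num) hv
  rw [Real.Gamma_one_half_eq, ← Real.sqrt_eq_rpow] at this
  rw [show (-(1/2) : ℝ) = 1/2 - 1 by norm_num, this, one_div, Real.sqrt_inv]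
  field_simp

open MeasureTheory Set in
lemma gam_intble (v : ℝ) (hv : 0 < v) :
    IntegrableOn (fun s : ℝ => s ^ (-(1/2) : ℝ) * Real.exp (-(v * s))) (Ioi (0:ℝ)) := by
  by_contra h
  have h1 := gam_int v hv
  rw [integral_undef h] at h1
  have : 0 < Real.sqrt Real.pi / Real.sqrt v := by positivity
  linarith

noncomputable def phiF (s : ℝ) : ℝ := 1 / (Real.exp s - 1) - 1 / s + 1 / 2

lemma phiF_abs (s : ℝ) (hs : 0 < s) : |phiF s| ≤ 1 / 2 := by
  have h1 := Real.add_one_le_exp s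
  have h2 := Real.add_one_le_exp (-s)
  have h3 : Real.exp s * Real.exp (-s) = 1 := by rw [← Real.exp_add]; simp
  have h4 := Real.exp_pos s
  have h5 : 0 < Real.exp s - 1 := by linarith
  rw [abs_le]
  unfold phiF
  constructor
  · have : 1 / s ≤ 1 / (Real.exp s - 1) + 1 := by
      rw [div_add_one h5.ne', div_le_div_iff₀ hs h5]
      nlinarith
    linarith
  · have : 1 / (Real.exp s - 1) ≤ 1 / s := one_div_le_one_div_of_le hs (by linarith)
    linarith

lemma phiF_meas : Measurable phiF := by
  unfold phiF
  fun_prop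

open MeasureTheory Set in
lemma phi_intble (v : ℝ) (hv : 0 < v) :
    IntegrableOn (fun s : ℝ => s ^ (-(1/2) : ℝ) * Real.exp (-(v * s)) * phiF s) (Ioi (0:ℝ)) := by
  refine Integrable.mono' (gam_intble v hv) ?_ ?_
  · refine Measurable.aestronglyMeasurable ?_
    have := phiF_meas
    fun_prop
  · refine (ae_restrict_mem measurableSet_Ioi).mono (fun s hs => ?_)
    have hs' : (0:ℝ) < s := hs
    rw [norm_mul, Real.norm_eq_abs, Real.norm_eq_abs, abs_of_nonneg (by positivity)]
    have := phiF_abs s hs'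
    have h0 : 0 ≤ s ^ (-(1/2) : ℝ) * Real.exp (-(v * s)) := by positivity
    nlinarith

noncomputable def Hint (v : ℝ) : ℝ :=
  ∫ s in Set.Ioi (0:ℝ), s ^ (-(1/2) : ℝ) * Real.exp (-(v * s)) * phiF s

open MeasureTheory Set in
lemma Hint_abs (v : ℝ) (hv : 0 < v) : |Hint v| ≤ Real.sqrt Real.pi / Real.sqrt v := by
  rw [← gam_int v hv, Hint, ← Real.norm_eq_abs]
  refine norm_integral_le_of_norm_le (gam_intble v hv) ?_
  refine (ae_restrict_mem measurableSet_Ioi).mono (fun s hs => ?_)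
  have hs' : (0:ℝ) < s := hs
  rw [norm_mul, Real.norm_eq_abs, Real.norm_eq_abs, abs_of_nonneg (by positivity)]
  have := phiF_abs s hs'
  have h0 : 0 ≤ s ^ (-(1/2) : ℝ) * Real.exp (-(v * s)) := by positivity
  nlinarith

lemma exp_diff_bound (v s : ℝ) (hs : 0 < s) :
    0 ≤ Real.exp (-(v * s)) - Real.exp (-((v + 1) * s)) ∧
    Real.exp (-(v * s)) - Real.exp (-((v + 1) * s)) ≤ s * Real.exp (-(v * s)) := by
  have h1 : Real.exp (-((v + 1) * s)) = Real.exp (-(v * s)) * Real.exp (-s) := by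
    rw [← Real.exp_add]; ring_nf
  have h2 := Real.add_one_le_exp (-s)
  have h3 := Real.exp_pos (-(v * s))
  have h4 : Real.exp (-s) ≤ 1 := Real.exp_le_one_iff.mpr (by linarith)
  rw [h1]
  constructor <;> nlinarith

lemma rpow_aux (s : ℝ) (hs : 0 < s) : s ^ (-(3/2) : ℝ) * s = s ^ (-(1/2) : ℝ) := by
  rw [← Real.rpow_add_one hs.ne']; norm_num

open MeasureTheory Set in
lemma three_half_intble (v : ℝ) (hv : 0 < v) :
    IntegrableOn (fun s : ℝ => s ^ (-(3/2) : ℝ) *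
      (Real.exp (-(v * s)) - Real.exp (-((v + 1) * s)))) (Ioi (0:ℝ)) := by
  refine Integrable.mono' (gam_intble v hv) ?_ ?_
  · refine Measurable.aestronglyMeasurable ?_
    fun_prop
  · refine (ae_restrict_mem measurableSet_Ioi).mono (fun s hs => ?_)
    have hs' : (0:ℝ) < s := hs
    obtain ⟨h1, h2⟩ := exp_diff_bound v s hs'
    rw [Real.norm_eq_abs, abs_of_nonneg (by positivity), ← rpow_aux s hs', mul_assoc]
    gcongr

open MeasureTheory Set Filter Topology in
lemma three_half_int (v : ℝ) (hv : 0 < v) :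
    ∫ s in Ioi (0:ℝ), s ^ (-(3/2) : ℝ) *
      (Real.exp (-(v * s)) - Real.exp (-((v + 1) * s))) =
      2 * Real.sqrt Real.pi * (Real.sqrt (v + 1) - Real.sqrt v) := by
  have hv1 : 0 < v + 1 := by linarith
  set g : ℝ → ℝ := fun s => -2 * (s ^ (-(1/2) : ℝ) *
      (Real.exp (-(v * s)) - Real.exp (-((v + 1) * s)))) with hg
  set g' : ℝ → ℝ := fun s => s ^ (-(3/2) : ℝ) *
      (Real.exp (-(v * s)) - Real.exp (-((v + 1) * s))) -
      (2 * (v + 1) * (s ^ (-(1/2) : ℝ) * Real.exp (-((v + 1) * s))) -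
      2 * v * (s ^ (-(1/2) : ℝ) * Real.exp (-(v * s)))) with hg'
  have hI1 := three_half_intble v hv
  have hI2 := (gam_intble (v+1) hv1).const_mul (2 * (v + 1))
  have hI3 := (gam_intble v hv).const_mul (2 * v)
  have hder : ∀ s ∈ Ioi (0:ℝ), HasDerivAt g (g' s) s := by
    intro s hs
    have hs' : (0:ℝ) < s := hs
    have d1 : HasDerivAt (fun s : ℝ => s ^ (-(1/2) : ℝ)) (-(1/2) * s ^ (-(1/2) - 1 : ℝ)) s :=
      Real.hasDerivAt_rpow_const (Or.inl hs'.ne')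
    have d2 (w : ℝ) : HasDerivAt (fun s : ℝ => Real.exp (-(w * s)))
        (Real.exp (-(w * s)) * (-(w * 1))) s :=
      (((hasDerivAt_id s).const_mul w).neg).exp
    have := (d1.mul ((d2 v).sub (d2 (v+1)))).const_mul (-2)
    convert! this using 1
    simp only [hg']
    rw [show (-(1/2) - 1 : ℝ) = -(3/2) by norm_num]
    simp only [Pi.sub_apply]
    ring
  have hint : IntegrableOn g' (Ioi 0) := hI1.sub (hI2.sub hI3)
  have hb : ∀ s ∈ Ioi (0:ℝ), ‖g s‖ ≤ 2 * (s ^ (1/2 : ℝ) * Real.exp (-(v * s))) := by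
    intro s hs
    have hs' : (0:ℝ) < s := hs
    obtain ⟨h1, h2⟩ := exp_diff_bound v s hs'
    have e : s ^ (1/2 : ℝ) = s ^ (-(1/2) : ℝ) * s := by
      rw [← Real.rpow_add_one hs'.ne']; norm_num
    simp only [hg]
    rw [norm_mul, Real.norm_eq_abs, Real.norm_eq_abs, abs_of_nonneg (a := _ * _) (by positivity),
      e, mul_assoc (s ^ (-(1/2) : ℝ))]
    norm_num
    gcongr
  have h0 : Tendsto g (𝓝[>] 0) (𝓝 0) := by
    refine squeeze_zero_norm' ((eventually_mem_nhdsWithin).mono hb) ?_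
    have : ContinuousAt (fun s : ℝ => 2 * (s ^ (1/2 : ℝ) * Real.exp (-(v * s)))) 0 := by
      refine continuousAt_const.mul (ContinuousAt.mul ?_ (by fun_prop))
      exact Real.continuousAt_rpow_const _ _ (Or.inr (by norm_num))
    have := this.tendsto
    rw [Real.zero_rpow (by norm_num), zero_mul, mul_zero] at this
    exact this.mono_left nhdsWithin_le_nhds
  have hinf : Tendsto g atTop (𝓝 0) := by
    refine squeeze_zero_norm' ((eventually_gt_atTop 0).mono hb) ?_
    have := (tendsto_rpow_mul_exp_neg_mul_atTop_nhds_zero (1/2) v hv).const_mul 2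
    simpa using this
  have key := integral_Ioi_of_hasDerivAt_of_tendsto (a := (0:ℝ)) (f := Function.update g 0 0) (f' := g') (m := 0) ?_ ?_ hint ?_
  · rw [Function.update_self, sub_zero, hg'] at key
    have hI23 : IntegrableOn (fun s : ℝ => 2 * (v + 1) * (s ^ (-(1/2) : ℝ) * Real.exp (-((v + 1) * s))) -
      2 * v * (s ^ (-(1/2) : ℝ) * Real.exp (-(v * s)))) (Ioi (0:ℝ)) := hI2.sub hI3
    rw [integral_sub hI1 hI23, integral_sub hI2 hI3, integral_const_mul, integral_const_mul, gam_int _ hv, gam_int _ hv1] at key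
    rw [sub_eq_zero.mp key]
    have e1 := Real.mul_self_sqrt hv.le
    have e2 := Real.mul_self_sqrt hv1.le
    have p1 := Real.sqrt_pos.mpr hv
    have p2 := Real.sqrt_pos.mpr hv1
    have f1 : (v + 1) * (Real.sqrt Real.pi / Real.sqrt (v+1)) = Real.sqrt Real.pi * Real.sqrt (v+1) := by
      rw [mul_div_assoc', div_eq_iff p2.ne', mul_assoc, e2, mul_comm]
    have f2 : v * (Real.sqrt Real.pi / Real.sqrt v) = Real.sqrt Real.pi * Real.sqrt v := by
      rw [mul_div_assoc', div_eq_iff p1.ne', mul_assoc, e1, mul_comm]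
    rw [mul_assoc, mul_assoc, f1, f2]
    ring
  · rw [continuousWithinAt_update_same]
    have : Ici (0:ℝ) \ {0} = Ioi 0 := by ext x; simp [lt_iff_le_and_ne, eq_comm]
    rw [this]
    exact h0
  · intro s hs
    have hs' : (0:ℝ) < s := hs
    refine (hder s hs).congr_of_eventuallyEq ?_
    filter_upwards [eventually_ne_nhds hs'.ne'] with y hy
    simp [Function.update_of_ne hy]
  · refine hinf.congr' ?_
    filter_upwards [eventually_gt_atTop (0:ℝ)] with y hy
    simp [Function.update_of_ne hy.ne']

open MeasureTheory Set in
lemma Hint_diff (v : ℝ) (hv : 0 < v) : Hint v - Hint (v + 1) =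
    Real.sqrt Real.pi * (1 / (2 * Real.sqrt v) + 1 / (2 * Real.sqrt (v + 1))
      - 2 * (Real.sqrt (v + 1) - Real.sqrt v)) := by
  have hv1 : 0 < v + 1 := by linarith
  have hI1 := three_half_intble v hv
  have hI2 := (gam_intble (v+1) hv1).const_mul (1/2)
  have hI3 := (gam_intble v hv).const_mul (1/2)
  rw [Hint, Hint, ← integral_sub (phi_intble v hv) (phi_intble _ hv1)]
  have : ∫ s in Ioi (0:ℝ), (s ^ (-(1/2) : ℝ) * Real.exp (-(v * s)) * phiF s -
      s ^ (-(1/2) : ℝ) * Real.exp (-((v + 1) * s)) * phiF s) =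
      ∫ s in Ioi (0:ℝ), ((1/2 * (s ^ (-(1/2) : ℝ) * Real.exp (-(v * s))) +
        1/2 * (s ^ (-(1/2) : ℝ) * Real.exp (-((v + 1) * s)))) -
        s ^ (-(3/2) : ℝ) * (Real.exp (-(v * s)) - Real.exp (-((v + 1) * s)))) := by
    refine setIntegral_congr_fun measurableSet_Ioi (fun s hs => ?_)
    have hs' : (0:ℝ) < s := hs
    have h1 : Real.exp (-(v * s)) = Real.exp (-((v + 1) * s)) * Real.exp s := by
      rw [← Real.exp_add]; ring_nf
    have h5 : Real.exp s - 1 ≠ 0 := by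
      have := Real.add_one_lt_exp hs'.ne'
      linarith
    simp only [phiF]
    rw [h1, ← rpow_aux s hs']
    field_simp
    ring
  have hI23 : IntegrableOn (fun s : ℝ => 1/2 * (s ^ (-(1/2) : ℝ) * Real.exp (-(v * s))) +
        1/2 * (s ^ (-(1/2) : ℝ) * Real.exp (-((v + 1) * s)))) (Ioi (0:ℝ)) := hI3.add hI2
  rw [this, integral_sub hI23 hI1, integral_add hI3 hI2, integral_const_mul,
    integral_const_mul, gam_int _ hv, gam_int _ hv1, three_half_int v hv]
  field_simp

lemma sum_eq_Hint (n : ℕ) (hn : 1 ≤ n) :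
    ((∑ k ∈ Finset.Icc 1 n, 1 / Real.sqrt k : ℝ) : ℂ) =
      2 * (Real.sqrt n : ℂ) + riemannZeta (1 / 2) + 1 / (2 * (Real.sqrt n : ℂ)) -
        ((Hint n / Real.sqrt Real.pi : ℝ) : ℂ) := by
  set u : ℕ → ℝ := fun N => (∑ k ∈ Finset.Icc 1 N, 1 / Real.sqrt k) - 2 * Real.sqrt N -
    1 / (2 * Real.sqrt N) + Hint N / Real.sqrt Real.pi with hu
  have hpi : 0 < Real.sqrt Real.pi := by positivity
  have hstep : ∀ N, n ≤ N → u N = u n := by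
    intro N hN
    induction N, hN using Nat.le_induction with
    | base => rfl
    | succ N hN ih =>
      rw [← ih]
      have hN0 : (0:ℝ) < N := by exact_mod_cast (by omega : 0 < N)
      have h := Hint_diff N hN0
      simp only [hu]
      rw [Finset.sum_Icc_succ_top (by omega)]
      push_cast
      have : Hint ((N:ℝ) + 1) = Hint N - Real.sqrt Real.pi * (1 / (2 * Real.sqrt N) + 1 / (2 * Real.sqrt (N + 1))
        - 2 * (Real.sqrt (N + 1) - Real.sqrt N)) := by linarith
      rw [this]
      have p1 := Real.sqrt_pos.mpr hN0
      have p2 := Real.sqrt_pos.mpr (show (0:ℝ) < N + 1 by linarith)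
      field_simp
      ring
  have hinv : Filter.Tendsto (fun N : ℕ => 1 / Real.sqrt N) Filter.atTop (nhds 0) :=
    tendsto_const_nhds.div_atTop (Real.tendsto_sqrt_atTop.comp tendsto_natCast_atTop_atTop)
  have hH : Filter.Tendsto (fun N : ℕ => - (1 / (2 * Real.sqrt N)) + Hint N / Real.sqrt Real.pi)
      Filter.atTop (nhds 0) := by
    have a1 : Filter.Tendsto (fun N : ℕ => Hint N / Real.sqrt Real.pi) Filter.atTop (nhds 0) := by
      refine squeeze_zero_norm' ?_ hinv
      filter_upwards [Filter.eventually_gt_atTop 0] with N hN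
      have := Hint_abs N (by exact_mod_cast hN)
      rw [Real.norm_eq_abs, abs_div, abs_of_pos hpi, div_le_iff₀ hpi]
      refine this.trans (le_of_eq (by ring))
    have a2 := (hinv.const_mul (-(1/2))).add a1
    simp only [mul_zero, add_zero] at a2
    refine a2.congr (fun N => ?_)
    field_simp
  have hlim : Filter.Tendsto (fun N => ((u N : ℝ) : ℂ)) Filter.atTop (nhds (riemannZeta (1/2))) := by
    have := zeta_half_lim.add ((Complex.continuous_ofReal.tendsto 0).comp hH)
    simp only [Complex.ofReal_zero, add_zero] at this
    refine this.congr (fun N => ?_)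
    simp only [hu, Function.comp]
    push_cast
    ring
  have hconst : Filter.Tendsto (fun N => ((u N : ℝ) : ℂ)) Filter.atTop (nhds ((u n : ℝ) : ℂ)) := by
    refine tendsto_const_nhds.congr' ?_
    filter_upwards [Filter.eventually_ge_atTop n] with N hN
    rw [hstep N hN]
  have := tendsto_nhds_unique hlim hconst
  rw [this]
  simp only [hu]
  push_cast
  ring

lemma st_zero_of_lt (k : ℕ) : ∀ l, k < l → stirling1Unsigned k l = 0 := by
  induction k with
  | zero => intro l hl; obtain ⟨l, rfl⟩ := Nat.exists_eq_succ_of_ne_zero hl.ne'; simp [stirling1Unsigned]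
  | succ k ih =>
    intro l hl
    obtain ⟨l, rfl⟩ : ∃ m, l = m + 1 := ⟨l - 1, by omega⟩
    simp only [stirling1Unsigned]
    rw [ih l (by omega), ih (l + 1) (by omega)]; simp

lemma st_succ_zero (k : ℕ) : stirling1Unsigned (k + 1) 0 = 0 := by
  induction k with
  | zero => simp [stirling1Unsigned]
  | succ k ih => rw [stirling1Unsigned, ih]; simp

open PowerSeries in
noncomputable def LS : ℝ⟦X⟧ := PowerSeries.mk (fun k => 1 / (k : ℝ))

open PowerSeries in
noncomputable def QS (l : ℕ) : ℝ⟦X⟧ :=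
  PowerSeries.mk (fun k => (l.factorial : ℝ) * stirling1Unsigned k l / k.factorial)

open PowerSeries in
lemma dLS : (1 - X) * (d⁄dX ℝ LS) = 1 := by
  ext n
  rw [sub_mul, one_mul, map_sub]
  cases n with
  | zero => simp [LS, coeff_derivative]
  | succ n =>
    rw [coeff_succ_X_mul, coeff_derivative, coeff_derivative]
    simp only [LS, coeff_mk, coeff_one]
    push_cast
    field_simp
    simp

open PowerSeries in
lemma dQS (l : ℕ) : (1 - X) * (d⁄dX ℝ (QS (l + 1))) = ((l : ℝ⟦X⟧) + 1) * QS l := by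
  ext n
  rw [sub_mul, one_mul, map_sub]
  have e : ((l : ℝ⟦X⟧) + 1) = C ((l : ℝ) + 1) := by simp
  rw [e, coeff_C_mul]
  cases n with
  | zero =>
    simp only [QS, coeff_derivative, coeff_mk]
    rw [coeff_zero_X_mul]
    simp [stirling1Unsigned, Nat.factorial_succ]
    ring
  | succ n =>
    rw [coeff_succ_X_mul, coeff_derivative, coeff_derivative]
    simp only [QS, coeff_mk]
    rw [stirling1Unsigned]
    push_cast [Nat.factorial_succ]
    have : (n.factorial : ℝ) ≠ 0 := by positivity
    field_simp
    ring

open PowerSeries in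
lemma LS_pow (l : ℕ) : LS ^ l = QS l := by
  have hX : (1 - X : ℝ⟦X⟧) ≠ 0 := by
    intro h
    have := congrArg (constantCoeff) h
    simp at this
  induction l with
  | zero =>
    ext n
    cases n with
    | zero => simp [QS, stirling1Unsigned]
    | succ n => simp [QS, st_succ_zero, coeff_one]
  | succ l ih =>
    apply derivative.ext
    · apply mul_left_cancel₀ hX
      rw [dQS, derivative_pow, ← ih]
      simp only [Nat.add_sub_cancel]
      push_cast
      linear_combination ((l : ℝ⟦X⟧) + 1) * LS ^ l * dLS
    · rw [map_pow]
      simp [LS, QS, ← coeff_zero_eq_constantCoeff_apply, stirling1Unsigned]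

open PowerSeries in
lemma LS_hs : HasSubst LS := HasSubst.of_constantCoeff_zero' (by simp [LS, ← coeff_zero_eq_constantCoeff_apply])

open PowerSeries in
lemma coeff_subst_LS (f : ℝ⟦X⟧) (k : ℕ) : coeff k (f.subst LS) =
    ∑ l ∈ Finset.range (k + 1), coeff l f * ((l.factorial : ℝ) * stirling1Unsigned k l / k.factorial) := by
  rw [coeff_subst' LS_hs]
  rw [finsum_eq_sum_of_support_subset (s := Finset.range (k + 1))]
  · apply Finset.sum_congr rfl
    intro l _
    rw [LS_pow]; simp [QS]
  · intro l hl
    by_contra h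
    apply hl
    simp only [Finset.coe_range, Set.mem_Iio, not_lt] at h
    simp only [LS_pow]; simp [QS, st_zero_of_lt k l (by omega)]

open PowerSeries in
noncomputable def BtS : ℝ⟦X⟧ := PowerSeries.mk (fun l => (bernoulli (l + 1) : ℝ) / (l + 1).factorial)
open PowerSeries in
noncomputable def ExS : ℝ⟦X⟧ := PowerSeries.mk (fun l => (-1) ^ l / (l.factorial : ℝ))
open PowerSeries in
noncomputable def FxS : ℝ⟦X⟧ := PowerSeries.mk (fun l => (-1) ^ l / ((l + 1).factorial : ℝ))

open PowerSeries in
lemma XF : X * FxS = 1 - ExS := by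
  ext n
  cases n with
  | zero => rw [coeff_zero_X_mul]; simp [ExS]
  | succ n => rw [coeff_succ_X_mul]; simp [ExS, FxS, coeff_one, pow_succ]; ring

open PowerSeries in
lemma XBt : X * BtS = bernoulliPowerSeries ℝ - 1 := by
  ext n
  cases n with
  | zero => rw [coeff_zero_X_mul]; simp [bernoulliPowerSeries]
  | succ n => rw [coeff_succ_X_mul]; simp [bernoulliPowerSeries, BtS, coeff_one]

open PowerSeries in
lemma expEx : exp ℝ * ExS = 1 := by
  have h := exp_mul_exp_neg_eq_one (A := ℝ)
  convert h using 2
  ext n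
  simp [ExS, evalNegHom, coeff_rescale, coeff_exp]
  ring

open PowerSeries in
lemma BtE : (BtS + 1) * (1 - ExS) = 1 - FxS := by
  have h1 := bernoulliPowerSeries_mul_exp_sub_one ℝ
  have h2 := expEx
  have h3 := XBt
  have h4 := XF
  apply mul_left_cancel₀ (X_ne_zero (R := ℝ))
  linear_combination (1 - ExS) * h3 + ExS * h1 - bernoulliPowerSeries ℝ * h2 + h4

open PowerSeries in
noncomputable def CS (x : ℝ) : ℝ⟦X⟧ := (rescale x (BtS + 1)).subst LS
open PowerSeries in
noncomputable def ES (x : ℝ) : ℝ⟦X⟧ := (rescale x ExS).subst LS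
open PowerSeries in
noncomputable def RS (x : ℝ) : ℝ⟦X⟧ := (rescale x FxS).subst LS

open PowerSeries in
lemma CSE (x : ℝ) : CS x * (1 - ES x) = 1 - RS x := by
  have h := congrArg (fun f => (substAlgHom (R := ℝ) LS_hs) (rescale x f)) BtE
  simp only [map_mul, map_sub, map_one] at h
  simp only [coe_substAlgHom] at h
  exact h

open PowerSeries in
lemma xLR (x : ℝ) : C x * LS * RS x = 1 - ES x := by
  have h := congrArg (fun f => (substAlgHom (R := ℝ) LS_hs) (rescale x f)) XF
  simp only [map_mul, map_sub, map_one, rescale_X] at h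
  simp only [coe_substAlgHom, subst_X LS_hs, subst_C] at h
  exact h

noncomputable def Pp (k : ℕ) (x : ℝ) : ℝ :=
  ∑ l ∈ Finset.range (k + 1), (bernoulli (l + 1) : ℝ) / (l + 1) * x ^ l * stirling1Unsigned k l / k.factorial

noncomputable def qq (k : ℕ) (y : ℝ) : ℝ :=
  ∑ l ∈ Finset.range (k + 1), (-y) ^ l * stirling1Unsigned k l / k.factorial

noncomputable def rr (k : ℕ) (x : ℝ) : ℝ :=
  ∑ l ∈ Finset.range (k + 1), (-x) ^ l / (l + 1) * stirling1Unsigned k l / k.factorial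

open PowerSeries in
lemma coeff_CS (x : ℝ) (k : ℕ) : coeff k (CS x) = Pp k x + if k = 0 then 1 else 0 := by
  have : CS x = (rescale x BtS).subst LS + 1 := by
    rw [CS, ← coe_substAlgHom LS_hs, map_add, map_add, map_one, map_one]
  rw [this, map_add, coeff_subst_LS, coeff_one, Pp]
  congr 1
  apply Finset.sum_congr rfl
  intro l _
  simp only [coeff_rescale, BtS, coeff_mk, Nat.factorial_succ]
  push_cast
  have : (l.factorial : ℝ) ≠ 0 := by positivity
  field_simp

open PowerSeries in
lemma coeff_ES (x : ℝ) (k : ℕ) : coeff k (ES x) = qq k x := by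
  rw [ES, coeff_subst_LS, qq]
  apply Finset.sum_congr rfl
  intro l _
  simp only [coeff_rescale, ExS, coeff_mk]
  have : (l.factorial : ℝ) ≠ 0 := by positivity
  rw [neg_pow x]
  field_simp

open PowerSeries in
lemma coeff_RS (x : ℝ) (k : ℕ) : coeff k (RS x) = rr k x := by
  rw [RS, coeff_subst_LS, rr]
  apply Finset.sum_congr rfl
  intro l _
  simp only [coeff_rescale, FxS, coeff_mk, Nat.factorial_succ]
  push_cast
  have : (l.factorial : ℝ) ≠ 0 := by positivity
  rw [neg_pow x]
  field_simp

lemma st_poly (k : ℕ) (z : ℝ) : ∑ l ∈ Finset.range (k + 1 + 1), z ^ l * (stirling1Unsigned (k + 1) l : ℝ) =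
    (z + k) * ∑ l ∈ Finset.range (k + 1), z ^ l * (stirling1Unsigned k l : ℝ) := by
  have h1 : ∑ l ∈ Finset.range (k + 1 + 1), z ^ l * (stirling1Unsigned k l : ℝ) =
      ∑ l ∈ Finset.range (k + 1), z ^ l * (stirling1Unsigned k l : ℝ) := by
    rw [Finset.sum_range_succ, st_zero_of_lt k (k + 1) (by omega)]; simp
  rw [Finset.sum_range_succ'] at h1 ⊢
  simp only [stirling1Unsigned]
  push_cast
  have h2 : ∑ x ∈ Finset.range (k + 1), z ^ (x + 1) * ((stirling1Unsigned k x : ℝ) + k * (stirling1Unsigned k (x + 1) : ℝ))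
      = z * ∑ x ∈ Finset.range (k + 1), z ^ x * (stirling1Unsigned k x : ℝ)
        + k * ∑ x ∈ Finset.range (k + 1), z ^ (x + 1) * (stirling1Unsigned k (x + 1) : ℝ) := by
    rw [Finset.mul_sum, Finset.mul_sum, ← Finset.sum_add_distrib]
    apply Finset.sum_congr rfl
    intro x _
    ring
  rw [h2]
  linear_combination (k : ℝ) * h1

lemma qq_zero (y : ℝ) : qq 0 y = 1 := by simp [qq, stirling1Unsigned]

lemma qq_succ (k : ℕ) (y : ℝ) : qq (k + 1) y = qq k y * ((k - y) / (k + 1)) := by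
  simp only [qq]
  rw [← Finset.sum_div, ← Finset.sum_div, st_poly, Nat.factorial_succ]
  push_cast
  have : (k.factorial : ℝ) ≠ 0 := by positivity
  field_simp
  ring

lemma qq_neg_mem (k : ℕ) (y : ℝ) (h0 : 0 ≤ y) (h1 : y ≤ 1) : 0 ≤ - qq (k + 1) y ∧ - qq (k + 1) y ≤ 1 := by
  induction k with
  | zero => simp [qq_succ, qq_zero]; exact ⟨h0, h1⟩
  | succ k ih =>
    rw [qq_succ, ← neg_mul]
    have a : 0 ≤ (((k + 1 : ℕ) : ℝ) - y) / (((k + 1 : ℕ) : ℝ) + 1) := by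
      apply div_nonneg
      · push_cast; linarith [Nat.cast_nonneg (α := ℝ) k]
      · positivity
    have b : (((k + 1 : ℕ) : ℝ) - y) / (((k + 1 : ℕ) : ℝ) + 1) ≤ 1 := by
      rw [div_le_one (by positivity)]; linarith
    exact ⟨mul_nonneg ih.1 a, mul_le_one₀ ih.2 a b⟩

lemma qq_cont (k : ℕ) : Continuous (qq k) := by
  unfold qq; fun_prop

lemma rr_int (k : ℕ) (x : ℝ) : rr k x = ∫ u in (0:ℝ)..1, qq k (x * u) := by
  unfold qq rr
  rw [intervalIntegral.integral_finsetSum]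
  · apply Finset.sum_congr rfl
    intro l _
    have : ∀ u : ℝ, (-(x * u)) ^ l * (stirling1Unsigned k l : ℝ) / k.factorial =
      ((-x) ^ l * (stirling1Unsigned k l : ℝ) / k.factorial) * u ^ l := by
      intro u; rw [← neg_mul, mul_pow]; ring
    simp only [this]
    rw [intervalIntegral.integral_const_mul, integral_pow]
    simp
    ring
  · intro l _
    apply Continuous.intervalIntegrable
    fun_prop

lemma rr_neg_mem (k : ℕ) (x : ℝ) (h0 : 0 ≤ x) (h1 : x ≤ 1) : 0 ≤ - rr (k + 1) x ∧ - rr (k + 1) x ≤ 1 := by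
  rw [rr_int, ← intervalIntegral.integral_neg]
  have hm : ∀ u ∈ Set.Icc (0:ℝ) 1, 0 ≤ - qq (k + 1) (x * u) ∧ - qq (k + 1) (x * u) ≤ 1 := fun u hu =>
    qq_neg_mem k _ (mul_nonneg h0 hu.1) (mul_le_one₀ h1 hu.1 hu.2)
  constructor
  · apply intervalIntegral.integral_nonneg zero_le_one
    intro u hu; exact (hm u hu).1
  · calc (∫ u in (0:ℝ)..1, - qq (k + 1) (x * u)) ≤ ∫ u in (0:ℝ)..1, (1:ℝ) := by
          apply intervalIntegral.integral_mono_on zero_le_one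
          · apply Continuous.intervalIntegrable
            have := qq_cont (k + 1); fun_prop
          · simp
          · intro u hu; exact (hm u hu).2
      _ = 1 := by simp

lemma rr_step (k : ℕ) (x : ℝ) (h0 : 0 ≤ x) (h1 : x ≤ 1) :
    (- rr (k + 1) x) * ((k + 1 - x) / (k + 2)) ≤ - rr (k + 2) x := by
  rw [rr_int, rr_int, ← intervalIntegral.integral_neg, ← intervalIntegral.integral_neg,
    ← intervalIntegral.integral_mul_const]
  have c1 := qq_cont (k + 1)
  have c2 := qq_cont (k + 2)
  apply intervalIntegral.integral_mono_on zero_le_one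
  · apply Continuous.intervalIntegrable; fun_prop
  · apply Continuous.intervalIntegrable; fun_prop
  · intro u hu
    have h := (qq_neg_mem k (x * u) (mul_nonneg h0 hu.1) (mul_le_one₀ h1 hu.1 hu.2)).1
    rw [qq_succ (k + 1), ← neg_mul]
    apply mul_le_mul_of_nonneg_left _ h
    push_cast
    rw [show (k : ℝ) + 1 + 1 = k + 2 by ring]
    gcongr
    exact mul_le_of_le_one_right h0 hu.2

lemma kaluza (b a c ρ : ℕ → ℝ) (hb0 : 0 < b 0) (hρ : ∀ j, 0 ≤ ρ j) (hm : Monotone ρ)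
    (hb : ∀ j, b (j + 1) = b j * ρ j) (ha0 : 0 ≤ a 0) (ha : ∀ n, a n * ρ n ≤ a (n + 1))
    (hc : ∀ n, ∑ p ∈ Finset.HasAntidiagonal.antidiagonal n, c p.1 * b p.2 = a n) : ∀ n, 0 ≤ c n := by
  have hbn : ∀ j, 0 ≤ b j := by
    intro j
    induction j with
    | zero => exact hb0.le
    | succ j ih => rw [hb]; exact mul_nonneg ih (hρ j)
  intro n
  induction n using Nat.strong_induction_on with
  | _ n ih =>
  cases n with
  | zero =>
    have := hc 0
    simp at this
    rw [← this] at ha0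
    exact nonneg_of_mul_nonneg_left ha0 hb0
  | succ n =>
    have h := hc (n + 1)
    rw [Finset.Nat.sum_antidiagonal_succ'] at h
    have h2 : ∑ p ∈ Finset.HasAntidiagonal.antidiagonal n, c p.1 * b (p.2 + 1) ≤ a n * ρ n := by
      rw [← hc n, Finset.sum_mul]
      apply Finset.sum_le_sum
      intro p hp
      have hp' := Finset.HasAntidiagonal.mem_antidiagonal.1 hp
      rw [hb, ← mul_assoc]
      apply mul_le_mul_of_nonneg_left
      · exact hm (by omega)
      · exact mul_nonneg (ih _ (by omega)) (hbn _)
    have h3 := ha n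
    have : 0 ≤ c (n + 1) * b 0 := by linarith
    exact nonneg_of_mul_nonneg_left this hb0

lemma kaluza_le (b a c ρ : ℕ → ℝ) (hb0 : 0 < b 0) (hρ : ∀ j, 0 ≤ ρ j)
    (hb : ∀ j, b (j + 1) = b j * ρ j)
    (hc : ∀ n, ∑ p ∈ Finset.HasAntidiagonal.antidiagonal n, c p.1 * b p.2 = a n) (h : ∀ n, 0 ≤ c n) (n : ℕ) : c n * b 0 ≤ a n := by
  have hbn : ∀ j, 0 ≤ b j := by
    intro j
    induction j with
    | zero => exact hb0.le
    | succ j ih => rw [hb]; exact mul_nonneg ih (hρ j)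
  rw [← hc n]
  exact Finset.single_le_sum (f := fun p : ℕ × ℕ => c p.1 * b p.2) (fun p _ => mul_nonneg (h _) (hbn _))
    (Finset.HasAntidiagonal.mem_antidiagonal.2 (by simp : (n, 0).1 + (n,0).2 = n))

open PowerSeries in
lemma CS_rel (x : ℝ) (n : ℕ) : ∑ p ∈ Finset.HasAntidiagonal.antidiagonal n, coeff p.1 (CS x) * (- qq (p.2 + 1) x) = - rr (n + 1) x := by
  have h := congrArg (coeff (n + 1)) (CSE x)
  rw [coeff_mul, Finset.Nat.sum_antidiagonal_succ'] at h
  have h00 : constantCoeff (ES x) = 1 := by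
    rw [← coeff_zero_eq_constantCoeff_apply, coeff_ES, qq_zero]
  simp [coeff_one, coeff_ES, coeff_RS, h00] at h
  simpa using h

open PowerSeries in
lemma CS_bd (x : ℝ) (h0 : 0 < x) (h1 : x ≤ 1) (n : ℕ) : 0 ≤ coeff n (CS x) ∧ coeff n (CS x) ≤ 1 / x := by
  have hb0 : 0 < - qq (0 + 1) x := by simp [qq_succ, qq_zero, h0]
  have hρ : ∀ j : ℕ, 0 ≤ ((j : ℝ) + 1 - x) / (j + 2) := fun j =>
    div_nonneg (by linarith [Nat.cast_nonneg (α := ℝ) j]) (by positivity)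
  have hb : ∀ j, - qq (j + 1 + 1) x = - qq (j + 1) x * (((j : ℝ) + 1 - x) / (j + 2)) := by
    intro j; rw [qq_succ (j + 1)]; push_cast; ring
  have hm : Monotone (fun j : ℕ => ((j : ℝ) + 1 - x) / (j + 2)) := by
    intro i j hij
    have : (i : ℝ) ≤ j := by exact_mod_cast hij
    simp only
    rw [div_le_div_iff₀ (by positivity) (by positivity)]
    nlinarith
  have hp := kaluza (fun j => - qq (j + 1) x) (fun n => - rr (n + 1) x) (fun n => coeff n (CS x)) _ hb0 hρ hm hb
    (rr_neg_mem 0 x h0.le h1).1 (fun n => rr_step n x h0.le h1) (CS_rel x)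
  have hl := kaluza_le (fun j => - qq (j + 1) x) (fun n => - rr (n + 1) x) (fun n => coeff n (CS x)) _ hb0 hρ hb (CS_rel x) hp n
  refine ⟨hp n, ?_⟩
  have : - qq (0 + 1) x = x := by simp [qq_succ, qq_zero]
  simp only [this] at hl
  rw [le_div_iff₀ h0]
  exact hl.trans (rr_neg_mem n x h0.le h1).2

open PowerSeries in
lemma Pp_nonneg (x : ℝ) (h0 : 0 < x) (h1 : x ≤ 1) (n : ℕ) : 0 ≤ Pp (n + 1) x := by
  have := (CS_bd x h0 h1 (n + 1)).1
  rw [coeff_CS] at this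
  simpa using this

open PowerSeries in
lemma ev_mul (f g : ℝ⟦X⟧) (w : ℝ) (hf : Summable fun k => ‖coeff k f * w ^ k‖)
    (hg : Summable fun k => ‖coeff k g * w ^ k‖) :
    (∑' k, coeff k f * w ^ k) * (∑' k, coeff k g * w ^ k) = ∑' k, coeff k (f * g) * w ^ k := by
  rw [tsum_mul_tsum_eq_tsum_sum_antidiagonal_of_summable_norm hf hg]
  congr 1
  ext n
  rw [coeff_mul, Finset.sum_mul]
  apply Finset.sum_congr rfl
  intro p hp
  rw [← Finset.HasAntidiagonal.mem_antidiagonal.1 hp, pow_add]; ring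

lemma bd_summable (c : ℕ → ℝ) (M w : ℝ) (hw0 : 0 ≤ w) (hw1 : w < 1) (h : ∀ k, |c k| ≤ M) :
    Summable fun k => ‖c k * w ^ k‖ := by
  apply Summable.of_nonneg_of_le (fun _ => norm_nonneg _) (fun k => ?_)
    ((summable_geometric_of_lt_one hw0 hw1).mul_left M)
  rw [norm_mul, Real.norm_eq_abs, Real.norm_eq_abs, abs_of_nonneg (pow_nonneg hw0 k)]
  exact mul_le_mul_of_nonneg_right (h k) (pow_nonneg hw0 k)

lemma qq_choose (k : ℕ) (x : ℝ) : Ring.choose (-x + k - 1) k = qq k x := by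
  have h1 : Ring.choose (-x + k - 1) k = Ring.multichoose (-x) k := by
    rw [Ring.choose]; congr 1; ring
  have h2 := Ring.factorial_nsmul_multichoose_eq_ascPochhammer (-x) k
  have h3 : ∀ k : ℕ, (k.factorial : ℝ) * qq k x = (ascPochhammer ℝ k).eval (-x) := by
    intro k
    induction k with
    | zero => simp [qq_zero]
    | succ k ih =>
      rw [ascPochhammer_succ_eval, ← ih, qq_succ, Nat.factorial_succ]
      push_cast
      field_simp
      ring
  rw [h1]
  have h4 : (k.factorial : ℝ) ≠ 0 := by positivity
  apply mul_left_cancel₀ h4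
  rw [h3, ← nsmul_eq_mul, h2, Polynomial.ascPochhammer_smeval_eq_eval]

lemma qq_sum (x w : ℝ) (hw0 : 0 ≤ w) (hw1 : w < 1) : HasSum (fun k => qq k x * w ^ k) ((1 - w) ^ x) := by
  have h := (Real.one_div_one_sub_rpow_hasFPowerSeriesOnBall_zero (-x)).hasSum (y := w)
    (by simp [abs_of_nonneg hw0, enorm_eq_nnnorm, ← NNReal.coe_lt_one, hw1])
  simp only [FormalMultilinearSeries.ofScalars_apply_eq, qq_choose, smul_eq_mul, zero_add] at h
  rw [Real.rpow_neg (by linarith)] at h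
  simpa using h

open PowerSeries in
lemma phi_hasSum (x t : ℝ) (h0 : 0 < x) (h1 : x ≤ 1) (ht : 0 < t) :
    HasSum (fun k => Pp (k + 1) x * (1 - Real.exp (-t)) ^ (k + 1)) (phiF (x * t)) := by
  have he1 : Real.exp (-t) < 1 := by simpa using ht
  have he0 := Real.exp_pos (-t)
  set w := 1 - Real.exp (-t) with hw
  have hw0 : 0 ≤ w := by linarith
  have hw1 : w < 1 := by linarith
  have bq : ∀ k, |qq k x| ≤ 1 := by
    intro k
    cases k with
    | zero => simp [qq_zero]
    | succ k => have := qq_neg_mem k x h0.le h1; rw [abs_le]; constructor <;> linarith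
  have br : ∀ k, |rr k x| ≤ 1 := by
    intro k
    cases k with
    | zero => simp [rr, stirling1Unsigned]
    | succ k => have := rr_neg_mem k x h0.le h1; rw [abs_le]; constructor <;> linarith
  have sE : Summable fun k => ‖coeff k (1 - ES x) * w ^ k‖ := by
    apply bd_summable _ 2 w hw0 hw1
    intro k
    rw [map_sub, coeff_ES, coeff_one]
    refine (abs_sub _ _).trans ?_
    have := bq k
    split_ifs <;> simp <;> linarith
  have sR : Summable fun k => ‖coeff k (RS x) * w ^ k‖ := by
    apply bd_summable _ 1 w hw0 hw1
    intro k; rw [coeff_RS]; exact br k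
  have sC : Summable fun k => ‖coeff k (CS x) * w ^ k‖ := by
    apply bd_summable _ (1 / x) w hw0 hw1
    intro k; have := CS_bd x h0 h1 k; rw [abs_of_nonneg this.1]; exact this.2
  have sL : Summable fun k => ‖coeff k (C x * LS) * w ^ k‖ := by
    apply bd_summable _ 1 w hw0 hw1
    intro k
    rw [coeff_C_mul, LS, coeff_mk, abs_of_nonneg (by positivity)]
    apply mul_le_one₀ h1 (by positivity)
    cases k with
    | zero => simp
    | succ k => rw [div_le_one (by positivity)]; simp
  have one_sum : HasSum (fun k => coeff k (1 : ℝ⟦X⟧) * w ^ k) 1 := by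
    convert hasSum_ite_eq 0 (1:ℝ) using 2 with k
    rw [coeff_one]; split_ifs with h <;> simp [h]
  have hexp : (1 - w) ^ x = Real.exp (-(x * t)) := by
    rw [hw, sub_sub_cancel, ← Real.exp_mul]; congr 1; ring
  have vE : ∑' k, coeff k (1 - ES x) * w ^ k = 1 - Real.exp (-(x * t)) := by
    rw [← hexp]
    refine HasSum.tsum_eq ?_
    have e : (fun k => coeff k (1 - ES x) * w ^ k) = fun k => coeff k (1 : ℝ⟦X⟧) * w ^ k - qq k x * w ^ k := by
      ext k; rw [map_sub, coeff_ES]; ring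
    rw [e]
    exact one_sum.sub (qq_sum x w hw0 hw1)
  have vL : ∑' k, coeff k (C x * LS) * w ^ k = x * t := by
    have h := Real.hasSum_pow_div_log_of_abs_lt_one (x := w) (by rw [abs_of_nonneg hw0]; exact hw1)
    rw [hw, sub_sub_cancel, Real.log_exp, neg_neg, ← hw] at h
    refine HasSum.tsum_eq ?_
    apply HasSum.mul_left x at h
    rw [← hasSum_nat_add_iff' 1]
    have e : (fun k : ℕ => coeff (k + 1) (C x * LS) * w ^ (k + 1)) = fun k : ℕ => x * (w ^ (k + 1) / ((k : ℝ) + 1)) := by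
      ext k; rw [coeff_C_mul, LS, coeff_mk]; push_cast; ring
    rw [e]
    have e0 : x * t - ∑ i ∈ Finset.range 1, coeff i (C x * LS) * w ^ i = x * t := by simp [LS]
    rw [e0]
    exact h
  have hxt : 0 < x * t := mul_pos h0 ht
  have e1 := ev_mul _ _ w sL sR
  rw [xLR, vL, vE] at e1
  have e2 := ev_mul _ _ w sC sE
  rw [CSE, vE] at e2
  have e3 : ∑' k, coeff k (1 - RS x) * w ^ k = 1 - ∑' k, coeff k (RS x) * w ^ k := by
    rw [← one_sum.tsum_eq, ← one_sum.summable.tsum_sub sR.of_norm]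
    simp [sub_mul]
  rw [e3] at e2
  have key : ∑' k, coeff k (CS x) * w ^ k = phiF (x * t) + 1 / 2 := by
    have hE1 : 1 - Real.exp (-(x * t)) ≠ 0 := by
      have : Real.exp (-(x * t)) < 1 := by simpa using hxt
      linarith
    apply mul_right_cancel₀ hE1
    rw [e2]
    have hr : ∑' k, coeff k (RS x) * w ^ k = (1 - Real.exp (-(x * t))) / (x * t) := by
      rw [eq_div_iff hxt.ne', mul_comm]; exact e1
    rw [hr, phiF]
    have h5 : Real.exp (x * t) ≠ 0 := (Real.exp_pos _).ne'
    have h6 : Real.exp (x * t) - 1 ≠ 0 := by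
      have : 1 < Real.exp (x * t) := by simpa using hxt
      linarith
    rw [Real.exp_neg]
    generalize Real.exp (x * t) = y at *
    have h7 : x ≠ 0 := h0.ne'
    have h8 : t ≠ 0 := ht.ne'
    field_simp
    ring
  have hs := sC.of_norm.hasSum
  rw [key, ← hasSum_nat_add_iff' 1] at hs
  have e : (fun k : ℕ => coeff (k + 1) (CS x) * w ^ (k + 1)) = fun k : ℕ => Pp (k + 1) x * w ^ (k + 1) := by
    ext k; rw [coeff_CS]; simp
  have e0 : phiF (x * t) + 1 / 2 - ∑ i ∈ Finset.range 1, coeff i (CS x) * w ^ i = phiF (x * t) := by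
    rw [Finset.sum_range_one, coeff_CS]
    simp [Pp, stirling1Unsigned, bernoulli_one]
    norm_num
  rw [e, e0] at hs
  exact hs

lemma phiF_nonneg (s : ℝ) (hs : 0 < s) : 0 ≤ phiF s := by
  have h := phi_hasSum 1 s one_pos le_rfl hs
  rw [one_mul] at h
  refine h.nonneg (fun k => mul_nonneg (Pp_nonneg 1 one_pos le_rfl k) (pow_nonneg ?_ _))
  have : Real.exp (-s) < 1 := by simpa using hs
  linarith

open MeasureTheory Set in
lemma beta_int (c : ℝ) (hc : 0 < c) (k : ℕ) : ∀ a : ℝ, 0 < a →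
    IntegrableOn (fun s : ℝ => Real.exp (-(a * (s * c))) * (1 - Real.exp (-(s * c))) ^ k) (Ioi 0) ∧
    ∫ s in Ioi (0:ℝ), Real.exp (-(a * (s * c))) * (1 - Real.exp (-(s * c))) ^ k =
      (1 / c) * (k.factorial / ∏ i ∈ Finset.range (k + 1), (a + i)) := by
  induction k with
  | zero =>
    intro a ha
    have h : (-(a * c)) < 0 := by nlinarith [mul_pos ha hc]
    have e : (fun s : ℝ => Real.exp (-(a * (s * c))) * (1 - Real.exp (-(s * c))) ^ 0) =
      fun s => Real.exp (-(a * c) * s) := by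
      ext s; rw [pow_zero, mul_one]; congr 1; ring
    rw [e, integral_exp_mul_Ioi h]
    refine ⟨integrableOn_exp_mul_Ioi h 0, ?_⟩
    simp
  | succ k ih =>
    intro a ha
    obtain ⟨i1, v1⟩ := ih a ha
    obtain ⟨i2, v2⟩ := ih (a + 1) (by linarith)
    have e : (fun s : ℝ => Real.exp (-(a * (s * c))) * (1 - Real.exp (-(s * c))) ^ (k + 1)) =
      fun s => Real.exp (-(a * (s * c))) * (1 - Real.exp (-(s * c))) ^ k -
        Real.exp (-((a + 1) * (s * c))) * (1 - Real.exp (-(s * c))) ^ k := by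
      ext s
      have : Real.exp (-((a + 1) * (s * c))) = Real.exp (-(a * (s * c))) * Real.exp (-(s * c)) := by
        rw [← Real.exp_add]; congr 1; ring
      rw [this]; ring
    rw [e]
    refine ⟨i1.sub i2, ?_⟩
    rw [integral_sub i1 i2, v1, v2]
    have p1 : ∏ i ∈ Finset.range (k + 1), (a + i) = a * ∏ i ∈ Finset.range k, (a + 1 + i) := by
      rw [Finset.prod_range_succ', mul_comm]; simp
      left
      apply Finset.prod_congr rfl
      intro i _; ring
    have p2 : ∏ i ∈ Finset.range (k + 1 + 1), (a + i) = a * ∏ i ∈ Finset.range (k + 1), (a + 1 + i) := by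
      rw [Finset.prod_range_succ', mul_comm]; simp
      left
      apply Finset.prod_congr rfl
      intro i _; ring
    rw [p1, p2, Finset.prod_range_succ]
    have hp : ∏ i ∈ Finset.range k, (a + 1 + i) ≠ 0 := by
      apply Finset.prod_ne_zero_iff.2
      intro i _; positivity
    have h1 : a + 1 + k ≠ 0 := by positivity
    rw [Nat.factorial_succ]
    push_cast
    field_simp
    ring

open MeasureTheory in
lemma mom_intble (l : ℕ) : Integrable (fun z : ℝ => ((1 + z ^ 2)⁻¹) ^ (l + 1)) := by
  refine Integrable.mono' integrable_inv_one_add_sq ?_ ?_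
  · apply Measurable.aestronglyMeasurable; fun_prop
  · refine Filter.Eventually.of_forall (fun z => ?_)
    have h0 : 0 ≤ (1 + z ^ 2)⁻¹ := by positivity
    have h1 : (1 + z ^ 2)⁻¹ ≤ 1 := inv_le_one_of_one_le₀ (by nlinarith)
    rw [Real.norm_eq_abs, abs_of_nonneg (pow_nonneg h0 _), pow_succ]
    exact mul_le_of_le_one_left h0 (pow_le_one₀ h0 h1)

open MeasureTheory Filter Topology in
lemma mom_rec (l : ℕ) : (2 * (l : ℝ) + 2) * ∫ z : ℝ, ((1 + z ^ 2)⁻¹) ^ (l + 1 + 1) =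
    (2 * l + 1) * ∫ z : ℝ, ((1 + z ^ 2)⁻¹) ^ (l + 1) := by
  have hd : ∀ z : ℝ, HasDerivAt (fun z : ℝ => z * ((1 + z ^ 2)⁻¹) ^ (l + 1))
      ((2 * (l : ℝ) + 2) * ((1 + z ^ 2)⁻¹) ^ (l + 1 + 1) - (2 * l + 1) * ((1 + z ^ 2)⁻¹) ^ (l + 1)) z := by
    intro z
    have hne : (1 + z ^ 2) ≠ 0 := by positivity
    have h1 : HasDerivAt (fun z : ℝ => 1 + z ^ 2) (2 * z) z := by
      simpa using (hasDerivAt_pow 2 z).const_add 1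
    have h2 := (hasDerivAt_id z).mul ((h1.inv hne).pow (l + 1))
    refine HasDerivAt.congr_deriv h2 ?_
    simp only [Nat.add_sub_cancel, id, Pi.inv_apply, Pi.pow_apply]
    push_cast
    have hu : (1 + z ^ 2) * (1 + z ^ 2)⁻¹ = 1 := mul_inv_cancel₀ hne
    rw [div_eq_mul_inv, ← inv_pow]
    generalize (1 + z ^ 2)⁻¹ = u at *
    linear_combination -(2 * (l : ℝ) + 2) * u ^ (l + 1) * hu
  have lim : ∀ F : Filter ℝ, Tendsto (fun z : ℝ => |z|) F atTop →
      Tendsto (fun z : ℝ => z * ((1 + z ^ 2)⁻¹) ^ (l + 1)) F (𝓝 0) := by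
    intro F hF
    apply squeeze_zero_norm' (a := fun z => |z|⁻¹)
    · filter_upwards [hF.eventually_gt_atTop 0] with z hz
      have h0 : 0 ≤ (1 + z ^ 2)⁻¹ := by positivity
      have h1 : (1 + z ^ 2)⁻¹ ≤ 1 := inv_le_one_of_one_le₀ (by nlinarith)
      rw [norm_mul, Real.norm_eq_abs, Real.norm_eq_abs, abs_of_nonneg (pow_nonneg h0 _)]
      calc |z| * ((1 + z ^ 2)⁻¹) ^ (l + 1) ≤ |z| * (1 + z ^ 2)⁻¹ := by
            gcongr
            rw [pow_succ]
            exact mul_le_of_le_one_left h0 (pow_le_one₀ h0 h1)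
        _ ≤ |z|⁻¹ := by
            rw [← div_eq_mul_inv, div_le_iff₀ (by positivity), ← sq_abs]
            field_simp
            nlinarith
    · exact tendsto_inv_atTop_zero.comp hF
  have i1 := (mom_intble (l + 1)).const_mul (2 * (l : ℝ) + 2)
  have i2 := (mom_intble l).const_mul (2 * (l : ℝ) + 1)
  have h := integral_of_hasDerivAt_of_tendsto hd (i1.sub i2) (lim _ tendsto_abs_atBot_atTop)
    (lim _ tendsto_abs_atTop_atTop)
  rw [integral_sub i1 i2, integral_const_mul, integral_const_mul] at h
  linarith

lemma mom_val (l : ℕ) : ∫ z : ℝ, ((1 + z ^ 2)⁻¹) ^ (l + 1) =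
    Real.pi * ((Nat.doubleFactorial (2 * l - 1) : ℝ) / (2 ^ l * l.factorial)) := by
  induction l with
  | zero => simp [integral_univ_inv_one_add_sq]
  | succ l ih =>
    have h := mom_rec l
    rw [ih] at h
    have hd : Nat.doubleFactorial (2 * (l + 1) - 1) = (2 * l + 1) * Nat.doubleFactorial (2 * l - 1) := by
      cases l with
      | zero => simp
      | succ l => rw [show 2 * (l + 1 + 1) - 1 = (2 * l + 1) + 2 by omega, Nat.doubleFactorial_add_two,
                    show 2 * (l + 1) - 1 = 2 * l + 1 by omega]; ring
    rw [hd]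
    have h2 : (2 * (l : ℝ) + 2) ≠ 0 := by positivity
    apply mul_left_cancel₀ h2
    rw [h, Nat.factorial_succ]
    push_cast
    field_simp
    ring

noncomputable def gg (k : ℕ) : ℝ := ∑ l ∈ Finset.range (k + 1), (bernoulli (l + 1) : ℝ) / (l + 1) *
  ((Nat.doubleFactorial (2 * l - 1) : ℝ) / (2 ^ l * l.factorial)) * stirling1Unsigned k l / k.factorial

open MeasureTheory in
lemma Pp_int (k : ℕ) : Integrable (fun z : ℝ => Pp k ((1 + z ^ 2)⁻¹) * (1 + z ^ 2)⁻¹) ∧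
    ∫ z : ℝ, Pp k ((1 + z ^ 2)⁻¹) * (1 + z ^ 2)⁻¹ = Real.pi * gg k := by
  have e : (fun z : ℝ => Pp k ((1 + z ^ 2)⁻¹) * (1 + z ^ 2)⁻¹) = fun z => ∑ l ∈ Finset.range (k + 1),
      ((bernoulli (l + 1) : ℝ) / (l + 1) * stirling1Unsigned k l / k.factorial) * ((1 + z ^ 2)⁻¹) ^ (l + 1) := by
    ext z
    rw [Pp, Finset.sum_mul]
    apply Finset.sum_congr rfl
    intro l _
    ring
  have hi : ∀ l ∈ Finset.range (k + 1), Integrable (fun z : ℝ =>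
      ((bernoulli (l + 1) : ℝ) / (l + 1) * stirling1Unsigned k l / k.factorial) * ((1 + z ^ 2)⁻¹) ^ (l + 1)) :=
    fun l _ => (mom_intble l).const_mul _
  rw [e]
  refine ⟨integrable_finsetSum _ hi, ?_⟩
  rw [integral_finsetSum _ hi, gg, Finset.mul_sum]
  apply Finset.sum_congr rfl
  intro l _
  rw [integral_const_mul, mom_val]
  ring

lemma gg_nonneg (k : ℕ) : 0 ≤ gg (k + 1) := by
  have h := (Pp_int (k + 1)).2
  have : 0 ≤ Real.pi * gg (k + 1) := by
    rw [← h]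
    apply MeasureTheory.integral_nonneg
    intro z
    exact mul_nonneg (Pp_nonneg _ (by positivity) (inv_le_one_of_one_le₀ (by nlinarith)) k) (by positivity)
  exact nonneg_of_mul_nonneg_right this Real.pi_pos

open MeasureTheory Set in
lemma gauss_part (v s : ℝ) (hv : 0 < v) (hs : 0 < s) :
    ∫⁻ z : ℝ, ENNReal.ofReal (Real.exp (-(v * (s * (1 + z ^ 2)))) * phiF s) =
      ENNReal.ofReal (Real.sqrt Real.pi / Real.sqrt v * (s ^ (-(1/2) : ℝ) * Real.exp (-(v * s)) * phiF s)) := by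
  have hvs : 0 < v * s := mul_pos hv hs
  have e : (fun z : ℝ => Real.exp (-(v * (s * (1 + z ^ 2)))) * phiF s) =
      fun z => (Real.exp (-(v * s)) * phiF s) * Real.exp (-(v * s) * z ^ 2) := by
    ext z
    rw [mul_right_comm, ← Real.exp_add]; congr 2; ring
  have hi : Integrable (fun z : ℝ => (Real.exp (-(v * s)) * phiF s) * Real.exp (-(v * s) * z ^ 2)) :=
    (integrable_exp_neg_mul_sq hvs).const_mul _
  have hn : ∀ z : ℝ, 0 ≤ Real.exp (-(v * (s * (1 + z ^ 2)))) * phiF s := fun z =>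
    mul_nonneg (Real.exp_pos _).le (phiF_nonneg s hs)
  rw [← ofReal_integral_eq_lintegral_ofReal (by rw [e]; exact hi) (Filter.Eventually.of_forall hn), e,
    integral_const_mul, integral_gaussian]
  congr 1
  rw [Real.rpow_neg hs.le, ← Real.sqrt_eq_rpow, Real.sqrt_div Real.pi_pos.le, Real.sqrt_mul hv.le]
  have h1 : Real.sqrt v ≠ 0 := by positivity
  have h2 : Real.sqrt s ≠ 0 := by positivity
  field_simp

open MeasureTheory Set in
lemma main_lint (v : ℝ) (hv : 0 < v) :
    ∑' k : ℕ, ENNReal.ofReal (Real.pi * gg (k + 1) *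
      ((k + 1).factorial / ∏ i ∈ Finset.range (k + 1 + 1), (v + i))) =
      ENNReal.ofReal (Real.sqrt Real.pi / Real.sqrt v * Hint v) := by
  have hpos : ∀ k : ℕ, 0 ≤ ((k + 1).factorial : ℝ) / ∏ i ∈ Finset.range (k + 1 + 1), (v + i) := fun k =>
    div_nonneg (by positivity) (Finset.prod_nonneg fun i _ => by positivity)
  have hP : ∀ (k : ℕ) (z : ℝ), 0 ≤ Pp (k + 1) ((1 + z ^ 2)⁻¹) := fun k z =>
    Pp_nonneg _ (by positivity) (inv_le_one_of_one_le₀ (by nlinarith)) k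
  have hw : ∀ (k : ℕ) (z s : ℝ), 0 < s → 0 ≤ (1 - Real.exp (-(s * (1 + z ^ 2)))) ^ (k + 1) := by
    intro k z s hs
    apply pow_nonneg
    have : 0 < s * (1 + z ^ 2) := by positivity
    have : Real.exp (-(s * (1 + z ^ 2))) < 1 := by simpa using this
    linarith
  have hPc : ∀ k : ℕ, Continuous fun z : ℝ => Pp (k + 1) ((1 + z ^ 2)⁻¹) := by
    intro k
    unfold Pp
    have : Continuous fun z : ℝ => (1 + z ^ 2)⁻¹ := by
      apply Continuous.inv₀ (by fun_prop)
      intro z; positivity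
    fun_prop
  have step1 : ∀ (k : ℕ) (z : ℝ), ∫⁻ s in Ioi (0:ℝ), ENNReal.ofReal (Pp (k + 1) ((1 + z ^ 2)⁻¹) *
      (Real.exp (-(v * (s * (1 + z ^ 2)))) * (1 - Real.exp (-(s * (1 + z ^ 2)))) ^ (k + 1))) =
      ENNReal.ofReal ((Pp (k + 1) ((1 + z ^ 2)⁻¹) * (1 + z ^ 2)⁻¹) *
        ((k + 1).factorial / ∏ i ∈ Finset.range (k + 1 + 1), (v + i))) := by
    intro k z
    obtain ⟨i1, v1⟩ := beta_int (1 + z ^ 2) (by positivity) (k + 1) v hv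
    rw [← ofReal_integral_eq_lintegral_ofReal (i1.const_mul _), integral_const_mul, v1]
    · congr 1; ring
    · filter_upwards [ae_restrict_mem measurableSet_Ioi] with s hs
      exact mul_nonneg (hP k z) (mul_nonneg (Real.exp_pos _).le (hw k z s hs))
  have step2 : ∀ k : ℕ, ENNReal.ofReal (Real.pi * gg (k + 1) *
      ((k + 1).factorial / ∏ i ∈ Finset.range (k + 1 + 1), (v + i))) =
      ∫⁻ z : ℝ, ENNReal.ofReal ((Pp (k + 1) ((1 + z ^ 2)⁻¹) * (1 + z ^ 2)⁻¹) *
        ((k + 1).factorial / ∏ i ∈ Finset.range (k + 1 + 1), (v + i))) := by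
    intro k
    obtain ⟨i1, v1⟩ := Pp_int (k + 1)
    rw [← ofReal_integral_eq_lintegral_ofReal (i1.mul_const _), integral_mul_const, v1]
    refine Filter.Eventually.of_forall fun z => ?_
    exact mul_nonneg (mul_nonneg (hP k z) (by positivity)) (hpos k)
  have step3 : ∀ z s : ℝ, 0 < s → ∑' k : ℕ, ENNReal.ofReal (Pp (k + 1) ((1 + z ^ 2)⁻¹) *
      (Real.exp (-(v * (s * (1 + z ^ 2)))) * (1 - Real.exp (-(s * (1 + z ^ 2)))) ^ (k + 1))) =
      ENNReal.ofReal (Real.exp (-(v * (s * (1 + z ^ 2)))) * phiF s) := by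
    intro z s hs
    have hz : 0 < 1 + z ^ 2 := by positivity
    have h := (phi_hasSum ((1 + z ^ 2)⁻¹) (s * (1 + z ^ 2)) (by positivity)
      (inv_le_one_of_one_le₀ (by nlinarith)) (by positivity)).mul_left (Real.exp (-(v * (s * (1 + z ^ 2)))))
    rw [show (1 + z ^ 2)⁻¹ * (s * (1 + z ^ 2)) = s by field_simp] at h
    have e : (fun k : ℕ => Real.exp (-(v * (s * (1 + z ^ 2)))) *
        (Pp (k + 1) ((1 + z ^ 2)⁻¹) * (1 - Real.exp (-(s * (1 + z ^ 2)))) ^ (k + 1))) = fun k : ℕ =>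
        Pp (k + 1) ((1 + z ^ 2)⁻¹) *
      (Real.exp (-(v * (s * (1 + z ^ 2)))) * (1 - Real.exp (-(s * (1 + z ^ 2)))) ^ (k + 1)) := by
      ext k; ring
    rw [e] at h
    rw [← h.tsum_eq, ENNReal.ofReal_tsum_of_nonneg _ h.summable]
    intro k
    exact mul_nonneg (hP k z) (mul_nonneg (Real.exp_pos _).le (hw k z s hs))
  calc _ = ∑' k : ℕ, ∫⁻ z : ℝ, ∫⁻ s in Ioi (0:ℝ), ENNReal.ofReal (Pp (k + 1) ((1 + z ^ 2)⁻¹) *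
      (Real.exp (-(v * (s * (1 + z ^ 2)))) * (1 - Real.exp (-(s * (1 + z ^ 2)))) ^ (k + 1))) := by
        simp only [step2, step1]
    _ = ∫⁻ z : ℝ, ∑' k : ℕ, ∫⁻ s in Ioi (0:ℝ), ENNReal.ofReal (Pp (k + 1) ((1 + z ^ 2)⁻¹) *
      (Real.exp (-(v * (s * (1 + z ^ 2)))) * (1 - Real.exp (-(s * (1 + z ^ 2)))) ^ (k + 1))) := by
        rw [lintegral_tsum]
        intro k
        simp only [step1]
        have := (hPc k).measurable
        fun_prop
    _ = ∫⁻ z : ℝ, ∫⁻ s in Ioi (0:ℝ), ∑' k : ℕ, ENNReal.ofReal (Pp (k + 1) ((1 + z ^ 2)⁻¹) *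
      (Real.exp (-(v * (s * (1 + z ^ 2)))) * (1 - Real.exp (-(s * (1 + z ^ 2)))) ^ (k + 1))) := by
        congr 1
        ext z
        rw [lintegral_tsum]
        intro k
        fun_prop
    _ = ∫⁻ z : ℝ, ∫⁻ s in Ioi (0:ℝ), ENNReal.ofReal (Real.exp (-(v * (s * (1 + z ^ 2)))) * phiF s) := by
        congr 1
        ext z
        exact setLIntegral_congr_fun measurableSet_Ioi fun s hs => step3 z s hs
    _ = ∫⁻ s in Ioi (0:ℝ), ∫⁻ z : ℝ, ENNReal.ofReal (Real.exp (-(v * (s * (1 + z ^ 2)))) * phiF s) := by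
        apply lintegral_lintegral_swap
        apply Measurable.aemeasurable
        have := phiF_meas
        unfold Function.uncurry
        fun_prop
    _ = ∫⁻ s in Ioi (0:ℝ), ENNReal.ofReal (Real.sqrt Real.pi / Real.sqrt v *
          (s ^ (-(1/2) : ℝ) * Real.exp (-(v * s)) * phiF s)) :=
        setLIntegral_congr_fun measurableSet_Ioi fun s hs => gauss_part v s hv hs
    _ = _ := by
        rw [← ofReal_integral_eq_lintegral_ofReal ((phi_intble v hv).const_mul _), integral_const_mul, Hint]
        filter_upwards [ae_restrict_mem measurableSet_Ioi] with s hs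
        have hs' : (0:ℝ) < s := hs
        have := phiF_nonneg s hs'
        simp only [Pi.zero_apply]
        positivity

lemma main_sum (v : ℝ) (hv : 0 < v) :
    HasSum (fun k : ℕ => gg (k + 1) * (k + 1).factorial / risingProdR v (k + 1))
      (Real.sqrt v / Real.sqrt Real.pi * Hint v) := by
  have hl := main_lint v hv
  have hn : ∀ k : ℕ, 0 ≤ Real.pi * gg (k + 1) *
      ((k + 1).factorial / ∏ i ∈ Finset.range (k + 1 + 1), (v + i)) := fun k =>
    mul_nonneg (mul_nonneg Real.pi_pos.le (gg_nonneg k))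
     (div_nonneg (by positivity) (Finset.prod_nonneg fun i _ => by positivity))
  have hne : ∑' k : ℕ, ENNReal.ofReal (Real.pi * gg (k + 1) *
      ((k + 1).factorial / ∏ i ∈ Finset.range (k + 1 + 1), (v + i))) ≠ ⊤ := by
    rw [hl]; exact ENNReal.ofReal_ne_top
  have hs := ENNReal.hasSum_toReal hne
  rw [← ENNReal.tsum_toReal_eq (fun k => ENNReal.ofReal_ne_top), hl] at hs
  have hH : 0 ≤ Hint v := by
    apply MeasureTheory.setIntegral_nonneg measurableSet_Ioi
    intro s hs
    have hs' : (0:ℝ) < s := hs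
    have := phiF_nonneg s hs'
    positivity
  rw [ENNReal.toReal_ofReal (by positivity)] at hs
  simp only [ENNReal.toReal_ofReal (hn _)] at hs
  have h2 := hs.mul_left (v / Real.pi)
  have e1 : (fun k : ℕ => v / Real.pi * (Real.pi * gg (k + 1) *
      ((k + 1).factorial / ∏ i ∈ Finset.range (k + 1 + 1), (v + i)))) =
      fun k : ℕ => gg (k + 1) * (k + 1).factorial / risingProdR v (k + 1) := by
    ext k
    rw [Finset.prod_range_succ', risingProdR]
    have : ∏ i ∈ Finset.range (k + 1), (v + ((i + 1 : ℕ) : ℝ)) = ∏ i ∈ Finset.range (k + 1), (v + i + 1) := by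
      apply Finset.prod_congr rfl
      intro i _; push_cast; ring
    rw [this]
    have hp : ∏ i ∈ Finset.range (k + 1), (v + (i : ℝ) + 1) ≠ 0 := by
      apply Finset.prod_ne_zero_iff.2
      intro i _; positivity
    have := Real.pi_ne_zero
    simp
    field_simp
  have e2 : v / Real.pi * (Real.sqrt Real.pi / Real.sqrt v * Hint v) = Real.sqrt v / Real.sqrt Real.pi * Hint v := by
    have a1 := Real.mul_self_sqrt hv.le
    have a2 := Real.mul_self_sqrt Real.pi_pos.le
    have b1 : Real.sqrt v ≠ 0 := by positivity
    have b2 : Real.sqrt Real.pi ≠ 0 := by positivity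
    have := Real.pi_ne_zero
    rw [← mul_assoc]
    congr 1
    field_simp
    nlinarith
  rw [e1, e2] at h2
  exact h2

lemma term_eq (n k : ℕ) :
    (-1 : ℂ) ^ (k + 1) *
        (∑ l ∈ Finset.Icc 1 (k + 1),
          ((Nat.doubleFactorial (2 * l - 1) : ℂ) /
              (2 ^ l * ((l + 1).factorial : ℂ))) *
            (bernoulli (l + 1) : ℂ) * (S1 (k + 1) l : ℂ)) /
      risingProd (n : ℂ) (k + 1) =
    ((-(gg (k + 1) * (k + 1).factorial / risingProdR n (k + 1)) : ℝ) : ℂ) := by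
  have hr : risingProd (n : ℂ) (k + 1) = ((risingProdR n (k + 1) : ℝ) : ℂ) := by
    rw [risingProd, risingProdR]; push_cast; rfl
  rw [hr, ← neg_div, Complex.ofReal_div]
  congr 1
  rw [gg, Finset.sum_range_succ', st_succ_zero, Finset.mul_sum]
  rw [Finset.range_eq_Ico, Finset.sum_Ico_add' (fun l : ℕ => (bernoulli (l + 1) : ℝ) / ((l : ℕ) + 1) *
  ((Nat.doubleFactorial (2 * l - 1) : ℝ) / (2 ^ l * l.factorial)) * stirling1Unsigned (k + 1) l / (k + 1).factorial) 0 (k + 1) 1]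
  have hI : Finset.Ico (0 + 1) (k + 1 + 1) = Finset.Icc 1 (k + 1) := by ext; simp
  rw [hI]
  simp only [Nat.cast_zero, mul_zero, zero_div, add_zero]
  rw [Finset.sum_mul, ← Finset.sum_neg_distrib, Complex.ofReal_sum]
  apply Finset.sum_congr rfl
  intro l hl
  have hl1 := (Finset.mem_Icc.1 hl).1
  rw [S1]
  push_cast
  have hf : (((k + 1).factorial : ℕ) : ℂ) ≠ 0 := by exact_mod_cast (Nat.factorial_pos _).ne'
  have hlf : ((l.factorial : ℕ) : ℂ) ≠ 0 := by exact_mod_cast (Nat.factorial_pos _).ne'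
  have hl2 : ((l : ℂ) + 1) ≠ 0 := by exact_mod_cast Nat.succ_ne_zero l
  have hsgn : (-1 : ℂ) ^ (k + 1) * (-1) ^ (k + 1 + l) = (-1) ^ l := by
    rw [pow_add _ (k + 1) l, ← mul_assoc, ← mul_pow]; simp
  have key : (-1 : ℂ) ^ l * (bernoulli (l + 1) : ℂ) = - (bernoulli (l + 1) : ℂ) := by
    rcases Nat.even_or_odd l with he | ho
    · rw [bernoulli_eq_zero_of_odd he.add_one (by omega)]; simp
    · rw [ho.neg_one_pow]; ring
  rw [show ((l + 1).factorial : ℂ) = ((l : ℂ) + 1) * (l.factorial : ℂ) by rw [Nat.factorial_succ]; push_cast; rfl]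
  have : (-1 : ℂ) ^ (k + 1) * ((Nat.doubleFactorial (2 * l - 1) : ℂ) / (2 ^ l * (((l : ℂ) + 1) * (l.factorial : ℂ))) *
      (bernoulli (l + 1) : ℂ) * ((-1) ^ (k + 1 + l) * (stirling1Unsigned (k + 1) l : ℂ))) =
      (Nat.doubleFactorial (2 * l - 1) : ℂ) / (2 ^ l * (((l : ℂ) + 1) * (l.factorial : ℂ))) *
      (((-1 : ℂ) ^ (k + 1) * (-1) ^ (k + 1 + l)) * (bernoulli (l + 1) : ℂ)) * (stirling1Unsigned (k + 1) l : ℂ) := by ring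
  rw [this, hsgn, key]
  field_simp

open Finset in
/-- Generalized Faulhaber summation formula for the sum of inverse square roots
(summation formula 6, formula (52) of the paper). -/
theorem faulhaber_inverse_sqrt (n : ℕ) (hn : 1 ≤ n) :
    Summable (fun k : ℕ =>
      ‖(-1 : ℂ) ^ (k + 1) *
          (∑ l ∈ Icc 1 (k + 1),
            ((Nat.doubleFactorial (2 * l - 1) : ℂ) /
                (2 ^ l * ((l + 1).factorial : ℂ))) *
              (bernoulli (l + 1) : ℂ) * (S1 (k + 1) l : ℂ)) /
        risingProd (n : ℂ) (k + 1)‖) ∧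
    ((∑ k ∈ Icc 1 n, 1 / Real.sqrt k : ℝ) : ℂ) =
      2 * (Real.sqrt n : ℂ) + riemannZeta (1 / 2) + 1 / (2 * (Real.sqrt n : ℂ)) +
        1 / (Real.sqrt n : ℂ) *
          ∑' k : ℕ,
            (-1 : ℂ) ^ (k + 1) *
                (∑ l ∈ Icc 1 (k + 1),
                  ((Nat.doubleFactorial (2 * l - 1) : ℂ) /
                      (2 ^ l * ((l + 1).factorial : ℂ))) *
                    (bernoulli (l + 1) : ℂ) * (S1 (k + 1) l : ℂ)) /
              risingProd (n : ℂ) (k + 1) := by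
  have hv : (0:ℝ) < n := by exact_mod_cast hn
  have hs := main_sum n hv
  simp only [term_eq]
  refine ⟨?_, ?_⟩
  · have h1 := hs.summable.neg.norm
    refine h1.congr (fun k => ?_)
    rw [Complex.norm_real]
  · rw [← Complex.ofReal_tsum, hs.neg.tsum_eq, sum_eq_Hint n hn]
    have hq : (Real.sqrt n : ℂ) ≠ 0 := by
      have : Real.sqrt n ≠ 0 := by positivity
      exact_mod_cast this
    push_cast
    rw [sub_eq_add_neg]
    congr 1
    field_simp
end

section
/- Extended generalized Faulhaber formula for the partial sums of ζ(3/2): Let x ∈ ℝ with x > 0. Then the series ∑_{k=1}^{∞} (−1)^{k+1} (∑_{l=1}^{k} ((−1)^l (2l+1)!!/(2^{l+1} (l+1)!)) S_k^{(1)}(l) B_{l+1}({x})) / (x(x+1)(x+2)⋯(x+k)) converges absolutely, and ∑_{k=1}^{⌊x⌋} k^{−3/2} = ζ(3/2) − 2/√x − B_1({x})/(x√x) + (2/√x) ∑_{k=1}^{∞} (−1)^{k+1} (∑_{l=1}^{k} ((−1)^l (2l+1)!!/(2^{l+1} (l+1)!)) S_k^{(1)}(l) B_{l+1}({x})) / (x(x+1)(x+2)⋯(x+k)).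 -/
namespace EF

/-- `(exp t - 1)/t`. -/
noncomputable def Dq (t : ℂ) : ℂ := dslope Complex.exp 0 t

/-- `t exp(a t)/(exp t - 1)`. -/
noncomputable def FF (a : ℝ) (t : ℂ) : ℂ := Complex.exp (a * t) / Dq t

def St : Set ℂ := {t : ℂ | |t.im| < 2 * Real.pi}

lemma isOpen_St : IsOpen St :=
  isOpen_lt (continuous_abs.comp Complex.continuous_im) continuous_const

lemma zero_mem_St : (0 : ℂ) ∈ St := by
  simp [St, Real.pi_pos]

lemma Dq_diff : Differentiable ℂ Dq := by
  rw [← differentiableOn_univ]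
  exact (Complex.differentiableOn_dslope Filter.univ_mem).2 Complex.differentiable_exp.differentiableOn

lemma Dq_mul (t : ℂ) : t * Dq t = Complex.exp t - 1 := by
  have := sub_smul_dslope Complex.exp 0 t
  simpa [Dq] using this

lemma Dq_zero : Dq 0 = 1 := by
  simp [Dq, dslope_same]

lemma Dq_ne {t : ℂ} (ht : t ∈ St) : Dq t ≠ 0 := by
  intro h
  have h1 := Dq_mul t
  rw [h, mul_zero] at h1
  have h2 : Complex.exp t = 1 := by linear_combination -h1
  obtain ⟨n, hn⟩ := Complex.exp_eq_one_iff.1 h2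
  by_cases h0 : n = 0
  · subst h0
    have : t = 0 := by simpa using hn
    rw [this, Dq_zero] at h
    exact one_ne_zero h
  · have him : t.im = n * (2 * Real.pi) := by
      rw [hn]; simp
    have h3 : |t.im| < 2 * Real.pi := ht
    rw [him, abs_mul, abs_of_pos Real.two_pi_pos] at h3
    have h4 : (1 : ℝ) ≤ |(n : ℝ)| := by
      exact_mod_cast Int.one_le_abs h0
    nlinarith [Real.two_pi_pos]

lemma FF_diff (a : ℝ) : DifferentiableOn ℂ (FF a) St := by
  intro t ht
  apply DifferentiableAt.differentiableWithinAt
  unfold FF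
  exact DifferentiableAt.fun_div (by fun_prop) (Dq_diff t) (Dq_ne ht)

lemma FF_mul (a : ℝ) {t : ℂ} (ht : t ∈ St) :
    FF a t * (Complex.exp t - 1) = t * Complex.exp (a * t) := by
  rw [← Dq_mul, FF]
  have := Dq_ne ht
  field_simp

lemma FF_zero (a : ℝ) : FF a 0 = 1 := by simp [FF, Dq_zero]

lemma FF_contDiffAt (a : ℝ) {t : ℂ} (ht : t ∈ St) (n : ℕ) : ContDiffAt ℂ n (FF a) t :=
  ((FF_diff a).contDiffOn isOpen_St).contDiffAt (isOpen_St.mem_nhds ht)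

lemma bern_rec (n : ℕ) (a : ℝ) :
    ∑ k ∈ Finset.range (n + 1), ((n + 1).choose k : ℝ) * bernPoly k a = (n + 1) * a ^ n := by
  have key : ∀ k, bernPoly k a = Polynomial.aeval a (Polynomial.bernoulli k) := by
    intro k
    simp only [bernPoly, Polynomial.bernoulli, map_sum, Polynomial.aeval_monomial]
    refine Finset.sum_congr rfl fun i _ => ?_
    rw [map_mul]
    simp only [eq_ratCast, Rat.cast_natCast]
    ring
  have h := congrArg (Polynomial.aeval a) (Polynomial.sum_bernoulli n)
  simp only [map_sum, Polynomial.aeval_monomial, map_smul] at h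
  simp only [key]
  simp [Algebra.smul_def] at h
  exact h

lemma FF_rec (a : ℝ) (n : ℕ) :
    ∑ k ∈ Finset.range (n + 1), ((n + 1).choose k : ℂ) * iteratedDeriv k (FF a) 0
      = (n + 1) * (a : ℂ) ^ n := by
  have hE : (fun t => FF a t * (Complex.exp t - 1)) =ᶠ[nhds 0]
      (fun t => t * Complex.exp (a * t)) := by
    filter_upwards [isOpen_St.mem_nhds zero_mem_St] with t ht using FF_mul a ht
  have h := hE.iteratedDeriv_eq (n + 1)
  rw [iteratedDeriv_fun_mul (FF_contDiffAt a zero_mem_St _) (by fun_prop),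
    iteratedDeriv_fun_mul (by fun_prop) (by fun_prop)] at h
  have e1 : ∀ m, iteratedDeriv (m + 1) (fun t : ℂ => Complex.exp t - 1) 0 = 1 := by
    intro m
    have : deriv (fun t : ℂ => Complex.exp t - 1) = Complex.exp := by
      ext t; simp
    rw [iteratedDeriv_succ', this, iteratedDeriv_eq_iterate, Complex.iter_deriv_exp]
    simp
  rw [Finset.sum_range_succ] at h
  simp only [Nat.sub_self, iteratedDeriv_zero, Complex.exp_zero, sub_self, mul_zero, add_zero] at h
  have e2 : ∑ i ∈ Finset.range (n + 1), ((n + 1).choose i : ℂ) * iteratedDeriv i (FF a) 0 *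
      iteratedDeriv (n + 1 - i) (fun t : ℂ => Complex.exp t - 1) 0 =
      ∑ k ∈ Finset.range (n + 1), ((n + 1).choose k : ℂ) * iteratedDeriv k (FF a) 0 := by
    refine Finset.sum_congr rfl fun i hi => ?_
    have : n + 1 - i = (n - i) + 1 := by
      have := Finset.mem_range.1 hi
      omega
    rw [this, e1, mul_one]
  rw [e2] at h
  rw [h, Finset.sum_eq_single 1]
  · have : iteratedDeriv 1 (fun t : ℂ => t) 0 = 1 := by simp [iteratedDeriv_one]
    rw [this, iteratedDeriv_cexp_const_mul]
    simp
  · intro i _ hi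
    rcases i with _ | _ | i
    · simp
    · exact absurd rfl hi
    · have : iteratedDeriv (i + 1 + 1) (fun t : ℂ => t) 0 = 0 := by
        rw [iteratedDeriv_succ', iteratedDeriv_succ']
        simp
      rw [this]; simp
  · intro h; exact absurd (Finset.mem_range.2 (by omega)) h

lemma FF_iter (a : ℝ) (n : ℕ) : iteratedDeriv n (FF a) 0 = (bernPoly n a : ℂ) := by
  induction n using Nat.strong_induction_on with
  | _ n ih =>
    have h1 := FF_rec a n
    have h2 := congrArg (fun r : ℝ => (r : ℂ)) (bern_rec n a)
    push_cast at h2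
    rw [← h2, Finset.sum_range_succ, Finset.sum_range_succ] at h1
    rw [Finset.sum_congr rfl (fun k hk => by rw [ih k (Finset.mem_range.1 hk)])] at h1
    have h3 := add_left_cancel h1
    have h4 : ((n + 1).choose n : ℂ) ≠ 0 := by
      exact_mod_cast (Nat.choose_pos (Nat.le_succ n)).ne'
    exact mul_left_cancel₀ h4 h3

end EF

namespace EF

lemma FF_bound {a : ℝ} (ha0 : 0 ≤ a) (ha1 : a < 1) :
    ∃ M : ℝ, 0 ≤ M ∧ ∀ t : ℂ, -2 ≤ t.re → |t.im| ≤ 3 → ‖FF a t‖ ≤ M := by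
  have hpi := Real.pi_gt_three
  have hc : IsCompact (Set.Icc (-2 : ℝ) 2 ×ℂ Set.Icc (-3 : ℝ) 3) :=
    isCompact_Icc.reProdIm isCompact_Icc
  have hsub : (Set.Icc (-2 : ℝ) 2 ×ℂ Set.Icc (-3 : ℝ) 3) ⊆ St := by
    intro t ht
    have h2 := ht.2
    have : |t.im| ≤ 3 := abs_le.2 h2
    show |t.im| < 2 * Real.pi
    linarith
  obtain ⟨M0, hM0⟩ := hc.exists_bound_of_continuousOn ((FF_diff a).continuousOn.mono hsub)
  refine ⟨max (max M0 0) (2 * (1 / (1 - a) + 3)), le_max_of_le_left (le_max_right _ _), ?_⟩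
  intro t h1 h2
  by_cases hR : t.re ≤ 2
  · exact le_max_of_le_left (le_max_of_le_left (hM0 t ⟨⟨h1, hR⟩, abs_le.1 h2⟩))
  · push Not at hR
    apply le_max_of_le_right
    have htS : t ∈ St := by
      show |t.im| < 2 * Real.pi
      linarith
    have hmul := congrArg norm (FF_mul a htS)
    rw [norm_mul, norm_mul, Complex.norm_exp] at hmul
    have hre : ((a : ℂ) * t).re = a * t.re := by simp
    rw [hre] at hmul
    have hE : Real.exp t.re / 2 ≤ ‖Complex.exp t - 1‖ := by
      have h3 : ‖Complex.exp t‖ - ‖(1 : ℂ)‖ ≤ ‖Complex.exp t - 1‖ := norm_sub_norm_le _ _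
      rw [Complex.norm_exp, norm_one] at h3
      have := Real.add_one_le_exp t.re
      linarith
    have hn : ‖t‖ ≤ t.re + 3 := by
      have := Complex.norm_le_abs_re_add_abs_im t
      rw [abs_of_pos (by linarith : 0 < t.re)] at this
      linarith
    have hb : 0 < 1 - a := by linarith
    have he : (1 - a) * t.re ≤ Real.exp ((1 - a) * t.re) := by
      have := Real.add_one_le_exp ((1 - a) * t.re)
      linarith
    have he1 : 1 ≤ Real.exp ((1 - a) * t.re) := by
      apply Real.one_le_exp; nlinarith
    have hsplit : Real.exp t.re = Real.exp (a * t.re) * Real.exp ((1 - a) * t.re) := by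
      rw [← Real.exp_add]; congr 1; ring
    have h5 : t.re + 3 ≤ (1 / (1 - a) + 3) * Real.exp ((1 - a) * t.re) := by
      have : t.re = (1 / (1 - a)) * ((1 - a) * t.re) := by field_simp
      have h6 : t.re ≤ (1 / (1 - a)) * Real.exp ((1 - a) * t.re) := by
        calc t.re = (1 / (1 - a)) * ((1 - a) * t.re) := this
          _ ≤ _ := by gcongr
      linarith
    have h7 : ‖FF a t‖ * (Real.exp t.re / 2) ≤ (2 * (1 / (1 - a) + 3)) * (Real.exp t.re / 2) := by
      calc ‖FF a t‖ * (Real.exp t.re / 2) ≤ ‖FF a t‖ * ‖Complex.exp t - 1‖ := by gcongr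
        _ = ‖t‖ * Real.exp (a * t.re) := hmul
        _ ≤ ((1 / (1 - a) + 3) * Real.exp ((1 - a) * t.re)) * Real.exp (a * t.re) := by
            gcongr; linarith
        _ = _ := by rw [hsplit]; ring
    exact le_of_mul_le_mul_right h7 (by positivity)

lemma FF_iter_bound {a : ℝ} (ha0 : 0 ≤ a) (ha1 : a < 1) :
    ∃ M : ℝ, 0 ≤ M ∧ (∀ t : ℂ, -2 ≤ t.re → |t.im| ≤ 3 → ‖FF a t‖ ≤ M) ∧
      ∀ n : ℕ, ∀ t : ℂ, -1 ≤ t.re → |t.im| ≤ 2 → ‖iteratedDeriv n (FF a) t‖ ≤ n.factorial * M := by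
  obtain ⟨M, hM, h⟩ := FF_bound ha0 ha1
  refine ⟨M, hM, h, fun n t h1 h2 => ?_⟩
  have hpi := Real.pi_gt_three
  have hcl : ∀ z ∈ Metric.closedBall t 1, -2 ≤ z.re ∧ |z.im| ≤ 3 := by
    intro z hz
    have hz' : ‖z - t‖ ≤ 1 := by simpa [dist_eq_norm] using hz
    have hr := (Complex.abs_re_le_norm (z - t)).trans hz'
    have hi := (Complex.abs_im_le_norm (z - t)).trans hz'
    rw [Complex.sub_re, abs_le] at hr
    rw [Complex.sub_im, abs_le] at hi
    rw [abs_le] at h2 ⊢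
    refine ⟨by linarith, by linarith, by linarith⟩
  have hd : DiffContOnCl ℂ (FF a) (Metric.ball t 1) := by
    apply DifferentiableOn.diffContOnCl
    apply (FF_diff a).mono
    intro z hz
    have := hcl z (Metric.closure_ball_subset_closedBall hz)
    show |z.im| < 2 * Real.pi
    linarith [this.2]
  have := Complex.norm_iteratedDeriv_le_of_forall_mem_sphere_norm_le n one_pos hd
    (C := M) (fun z hz => by
      have := hcl z (Metric.sphere_subset_closedBall hz)
      exact h z this.1 this.2)
  simpa using this

/-- The function `u ↦ s F'(-s log (1-u))`. -/
noncomputable def gg (a s : ℝ) (u : ℂ) : ℂ := s * deriv (FF a) (-s * Complex.log (1 - u))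

lemma tt_mem {s : ℝ} (hs0 : 0 ≤ s) (hs1 : s ≤ 1) {u : ℂ} (hu : u ∈ Metric.ball (0 : ℂ) 1) :
    -1 ≤ (-s * Complex.log (1 - u)).re ∧ |(-s * Complex.log (1 - u)).im| ≤ 2 := by
  have hu' : ‖u‖ < 1 := by simpa using hu
  have hre : 0 < (1 - u).re := by
    have := Complex.re_le_norm u
    simp; linarith
  have h1 : (-s * Complex.log (1 - u)).re = -s * Real.log ‖1 - u‖ := by
    simp [Complex.log_re]
  have h2 : (-s * Complex.log (1 - u)).im = -s * Complex.arg (1 - u) := by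
    simp [Complex.log_im]
  rw [h1, h2]
  constructor
  · have hn : ‖1 - u‖ ≤ 2 := by
      calc ‖1 - u‖ ≤ ‖(1 : ℂ)‖ + ‖u‖ := norm_sub_le _ _
        _ ≤ 2 := by rw [norm_one]; linarith
    have hpos : 0 < ‖1 - u‖ := by
      rw [norm_pos_iff]; intro h; rw [h] at hre; simp at hre
    have : Real.log ‖1 - u‖ ≤ 1 := by
      have := Real.log_le_sub_one_of_pos hpos
      linarith
    nlinarith
  · have := Complex.abs_arg_lt_pi_div_two_iff.2 (Or.inl hre)
    rw [abs_mul, abs_neg, abs_of_nonneg hs0]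
    have hpi := Real.pi_lt_four
    nlinarith [abs_nonneg (Complex.arg (1 - u))]

lemma mem_St_of {t : ℂ} (h : |t.im| ≤ 2) : t ∈ St := by
  have hpi := Real.pi_gt_three
  show |t.im| < 2 * Real.pi
  linarith

lemma one_sub_slit {u : ℂ} (hu : u ∈ Metric.ball (0 : ℂ) 1) : 1 - u ∈ Complex.slitPlane := by
  have hu' : ‖u‖ < 1 := by simpa using hu
  left
  have := Complex.re_le_norm u
  simp; linarith

lemma iter_hasDeriv (a : ℝ) {t : ℂ} (ht : t ∈ St) (n : ℕ) :
    HasDerivAt (iteratedDeriv n (FF a)) (iteratedDeriv (n + 1) (FF a) t) t := by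
  rw [iteratedDeriv_succ]
  apply DifferentiableAt.hasDerivAt
  have := ((FF_diff a).analyticAt (isOpen_St.mem_nhds ht)).iterated_deriv n
  rw [iteratedDeriv_eq_iterate]
  exact this.differentiableAt

lemma comp_hasDeriv (a : ℝ) {s : ℝ} (hs0 : 0 ≤ s) (hs1 : s ≤ 1) {u : ℂ}
    (hu : u ∈ Metric.ball (0 : ℂ) 1) (n : ℕ) :
    HasDerivAt (fun u => iteratedDeriv n (FF a) (-s * Complex.log (1 - u)))
      (s / (1 - u) * iteratedDeriv (n + 1) (FF a) (-s * Complex.log (1 - u))) u := by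
  have h1 := iter_hasDeriv a (mem_St_of (tt_mem hs0 hs1 hu).2) n
  have h2 : HasDerivAt (fun u : ℂ => 1 - u) (-1) u := by
    simpa using (hasDerivAt_id u).const_sub 1
  have h3 := (h2.clog (one_sub_slit hu)).const_mul (-s : ℂ)
  have h4 := h1.comp u h3
  refine h4.congr_deriv ?_
  ring

lemma st_zero (k l : ℕ) (h : k < l) : stirling1Unsigned k l = 0 := by
  induction k generalizing l with
  | zero => cases l with
    | zero => omega
    | succ l => rfl
  | succ k ih => cases l with
    | zero => omega
    | succ l =>
      rw [stirling1Unsigned, ih l (by omega), ih (l + 1) (by omega)]; rfl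

lemma st_sum (k : ℕ) (y : ℕ → ℂ) :
    ∑ l ∈ Finset.range (k + 2), (stirling1Unsigned (k + 1) l : ℂ) * y l =
    ∑ l ∈ Finset.range (k + 1), (stirling1Unsigned k l : ℂ) * (k * y l + y (l + 1)) := by
  have h1 : ∑ l ∈ Finset.range (k + 1), (stirling1Unsigned k l : ℂ) * (k * y l) =
      ∑ l ∈ Finset.range (k + 2), (stirling1Unsigned k l : ℂ) * (k * y l) := by
    rw [Finset.sum_range_succ _ (k + 1), st_zero k (k + 1) (Nat.lt_succ_self k)]; simp
  simp only [mul_add, Finset.sum_add_distrib]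
  rw [h1, Finset.sum_range_succ', Finset.sum_range_succ' _ (k + 1)]
  simp only [stirling1Unsigned]
  push_cast
  simp only [add_mul, Finset.sum_add_distrib]
  ring_nf

lemma gg_iter (a : ℝ) {s : ℝ} (hs0 : 0 ≤ s) (hs1 : s ≤ 1) (k : ℕ) :
    ∀ u ∈ Metric.ball (0 : ℂ) 1, iteratedDeriv k (gg a s) u = ((1 - u) ^ k)⁻¹ *
      ∑ l ∈ Finset.range (k + 1), (stirling1Unsigned k l : ℂ) *
        ((s : ℂ) ^ (l + 1) * iteratedDeriv (l + 1) (FF a) (-s * Complex.log (1 - u))) := by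
  induction k with
  | zero =>
    intro u hu
    simp [gg, stirling1Unsigned, iteratedDeriv_one]
  | succ k ih =>
    intro u hu
    have hne : (1 - u) ≠ 0 := Complex.slitPlane_ne_zero (one_sub_slit hu)
    have hev : iteratedDeriv k (gg a s) =ᶠ[nhds u] fun u => ((1 - u) ^ k)⁻¹ *
      ∑ l ∈ Finset.range (k + 1), (stirling1Unsigned k l : ℂ) *
        ((s : ℂ) ^ (l + 1) * iteratedDeriv (l + 1) (FF a) (-s * Complex.log (1 - u))) := by
      filter_upwards [Metric.isOpen_ball.mem_nhds hu] with v hv using ih v hv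
    rw [iteratedDeriv_succ, hev.deriv_eq]
    have h2 : HasDerivAt (fun u : ℂ => 1 - u) (-1) u := by
      simpa using (hasDerivAt_id u).const_sub 1
    have h3 := (h2.fun_pow k).fun_inv (pow_ne_zero k hne)
    have h4 := HasDerivAt.fun_sum (u := Finset.range (k + 1)) (fun l _ =>
      ((comp_hasDeriv a hs0 hs1 hu (l + 1)).const_mul ((s : ℂ) ^ (l + 1))).const_mul
        (stirling1Unsigned k l : ℂ))
    rw [(h3.fun_mul h4).deriv, st_sum, Finset.mul_sum, Finset.mul_sum, Finset.mul_sum,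
      ← Finset.sum_add_distrib]
    refine Finset.sum_congr rfl fun l _ => ?_
    rcases k with _ | k
    · simp; field_simp; ring
    · simp only [Nat.add_sub_cancel]
      field_simp
      ring

lemma gg_diff (a : ℝ) {s : ℝ} (hs0 : 0 ≤ s) (hs1 : s ≤ 1) :
    DifferentiableOn ℂ (gg a s) (Metric.ball (0 : ℂ) 1) := by
  intro u hu
  have := (comp_hasDeriv a hs0 hs1 hu 1).const_mul (s : ℂ)
  simp only [iteratedDeriv_one] at this
  exact this.differentiableAt.differentiableWithinAt

/-- `c_k(s)`. -/
noncomputable def cs (a s : ℝ) (k : ℕ) : ℝ :=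
  ∑ l ∈ Finset.range (k + 1), (stirling1Unsigned k l : ℝ) * (s ^ (l + 1) * bernPoly (l + 1) a)

lemma gg_iter_zero (a : ℝ) {s : ℝ} (hs0 : 0 ≤ s) (hs1 : s ≤ 1) (k : ℕ) :
    iteratedDeriv k (gg a s) 0 = (cs a s k : ℂ) := by
  rw [gg_iter a hs0 hs1 k 0 (by simp)]
  simp [FF_iter, cs]

lemma gg_deriv_bound {a : ℝ} (ha0 : 0 ≤ a) (ha1 : a < 1) :
    ∃ C : ℝ, 0 ≤ C ∧ ∀ s : ℝ, 0 ≤ s → s ≤ 1 → ∀ u ∈ Metric.ball (0 : ℂ) 1,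
      ‖deriv (gg a s) u‖ ≤ C / ‖1 - u‖ := by
  obtain ⟨M, hM, -, h⟩ := FF_iter_bound ha0 ha1
  refine ⟨2 * M, by positivity, fun s hs0 hs1 u hu => ?_⟩
  have h1 := (comp_hasDeriv a hs0 hs1 hu 1).const_mul (s : ℂ)
  simp only [iteratedDeriv_one] at h1
  have h2 : deriv (gg a s) u = _ := h1.deriv
  have h3 := h 2 _ (tt_mem hs0 hs1 hu).1 (tt_mem hs0 hs1 hu).2
  have h3 : ‖iteratedDeriv 2 (FF a) (-↑s * Complex.log (1 - u))‖ ≤ 2 * M := by simpa using h3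
  rw [h2, norm_mul, norm_mul, norm_div, Complex.norm_real, Real.norm_of_nonneg hs0]
  calc s * (s / ‖1 - u‖ * ‖iteratedDeriv (1 + 1) (FF a) (-↑s * Complex.log (1 - u))‖)
      ≤ 1 * (1 / ‖1 - u‖ * (2 * M)) := by gcongr
    _ = _ := by ring

end EF

namespace EF

lemma circ_dist {r θ : ℝ} (hr : 1 / 2 ≤ r) (h0 : 0 < θ) (h1 : θ < 2 * Real.pi) :
    min θ (2 * Real.pi - θ) / 4 ≤ ‖1 - circleMap 0 r θ‖ := by
  have hpi := Real.pi_gt_three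
  have hpi4 := Real.pi_lt_four
  set m := min θ (2 * Real.pi - θ) with hm
  have hm0 : 0 < m := lt_min h0 (by linarith)
  have hs : m / 4 ≤ Real.sin (θ / 2) := by
    have key : ∀ y : ℝ, 0 ≤ y → y ≤ Real.pi / 2 → y / 2 ≤ Real.sin y := by
      intro y hy0 hy1
      have := Real.mul_le_sin hy0 hy1
      have h2 : 1 / 2 ≤ 2 / Real.pi := by
        rw [div_le_div_iff₀ (by norm_num) (by linarith)]; linarith
      nlinarith
    by_cases h : θ ≤ Real.pi
    · have := key (θ / 2) (by linarith) (by linarith)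
      have : m ≤ θ := min_le_left _ _
      linarith
    · push Not at h
      have h3 := key (Real.pi - θ / 2) (by linarith) (by linarith)
      rw [Real.sin_pi_sub] at h3
      have : m ≤ 2 * Real.pi - θ := min_le_right _ _
      linarith
  have hsq : ‖1 - circleMap 0 r θ‖ ^ 2 = (1 - r) ^ 2 + 4 * r * Real.sin (θ / 2) ^ 2 := by
    have hc : circleMap 0 r θ = r * Complex.exp (θ * Complex.I) := by simp [circleMap]
    rw [Complex.sq_norm, Complex.normSq_apply, hc]
    have e1 : (1 - (r : ℂ) * Complex.exp (θ * Complex.I)).re = 1 - r * Real.cos θ := by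
      simp [Complex.exp_ofReal_mul_I_re]
    have e2 : (1 - (r : ℂ) * Complex.exp (θ * Complex.I)).im = - (r * Real.sin θ) := by
      simp [Complex.exp_ofReal_mul_I_im]
    rw [e1, e2]
    have e3 : Real.cos θ = 1 - 2 * Real.sin (θ / 2) ^ 2 := by
      have := Real.cos_sq' (θ / 2)
      have h2 := Real.cos_two_mul (θ / 2)
      rw [mul_div_cancel₀ _ (by norm_num : (2 : ℝ) ≠ 0)] at h2
      linarith
    have e4 := Real.sin_sq_add_cos_sq θ
    have e5 : r ^ 2 * (Real.sin θ ^ 2 + Real.cos θ ^ 2) = r ^ 2 := by rw [e4, mul_one]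
    rw [show (1 - r * Real.cos θ) * (1 - r * Real.cos θ) + -(r * Real.sin θ) * -(r * Real.sin θ)
      = 1 - 2 * r * Real.cos θ + r ^ 2 * (Real.sin θ ^ 2 + Real.cos θ ^ 2) by ring, e5, e3]
    ring
  refine (sq_le_sq₀ (by positivity) (norm_nonneg _)).1 ?_
  rw [hsq]
  have : (m / 4) ^ 2 ≤ Real.sin (θ / 2) ^ 2 := by gcongr
  nlinarith [sq_nonneg (1 - r), sq_nonneg (Real.sin (θ / 2))]

noncomputable def WW (ε θ : ℝ) : ℝ := 4 * (θ ^ (ε - 1) + (2 * Real.pi - θ) ^ (ε - 1))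

lemma WW_int {ε : ℝ} (he : 0 < ε) :
    IntervalIntegrable (WW ε) MeasureTheory.volume 0 (2 * Real.pi) := by
  have h1 : IntervalIntegrable (fun θ : ℝ => θ ^ (ε - 1)) MeasureTheory.volume 0 (2 * Real.pi) :=
    intervalIntegral.intervalIntegrable_rpow' (by linarith)
  have h2 := h1.comp_sub_left (2 * Real.pi)
  simp only [sub_zero, sub_self] at h2
  exact (h1.add h2.symm).const_mul 4

lemma circ_inv {ε r θ : ℝ} (he0 : 0 < ε) (he1 : ε ≤ 1) (hr : 1 / 2 ≤ r) (hr1 : r < 1)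
    (h0 : 0 < θ) (h1 : θ < 2 * Real.pi) :
    1 / ‖1 - circleMap 0 r θ‖ ≤ (1 - r) ^ (-ε) * WW ε θ := by
  set d := ‖1 - circleMap 0 r θ‖ with hd
  have hδ : 0 < 1 - r := by linarith
  have hdδ : 1 - r ≤ d := by
    have := norm_sub_norm_le (1 : ℂ) (circleMap 0 r θ)
    rw [norm_one, norm_circleMap_zero, abs_of_pos (by linarith)] at this
    exact this
  have hd0 : 0 < d := by linarith
  have hdm := circ_dist hr h0 h1
  rw [← hd] at hdm
  have h2 : 0 < 2 * Real.pi - θ := by linarith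
  set m := min θ (2 * Real.pi - θ) with hm
  have hm0 : 0 < m := lt_min h0 h2
  have e1 : 1 / d = d ^ (-ε) * d ^ (ε - 1) := by
    rw [← Real.rpow_add hd0, show -ε + (ε - 1) = -1 by ring, Real.rpow_neg_one, one_div]
  have e2 : d ^ (-ε) ≤ (1 - r) ^ (-ε) :=
    Real.rpow_le_rpow_of_nonpos hδ hdδ (by linarith)
  have e3 : d ^ (ε - 1) ≤ (m / 4) ^ (ε - 1) :=
    Real.rpow_le_rpow_of_nonpos (by positivity) hdm (by linarith)
  have e4 : (m / 4) ^ (ε - 1) ≤ 4 * m ^ (ε - 1) := by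
    rw [Real.div_rpow hm0.le (by norm_num), div_eq_mul_inv, mul_comm, ← Real.rpow_neg (by norm_num)]
    gcongr
    calc (4 : ℝ) ^ (-(ε - 1)) ≤ 4 ^ (1 : ℝ) :=
          Real.rpow_le_rpow_of_exponent_le (by norm_num) (by linarith)
      _ = 4 := Real.rpow_one 4
  have e5 : m ^ (ε - 1) ≤ θ ^ (ε - 1) + (2 * Real.pi - θ) ^ (ε - 1) := by
    have p1 := Real.rpow_nonneg h0.le (ε - 1)
    have p2 := Real.rpow_nonneg h2.le (ε - 1)
    rcases min_choice θ (2 * Real.pi - θ) with h | h <;> rw [hm, h] <;> linarith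
  rw [e1, WW]
  have : d ^ (ε - 1) ≤ 4 * (θ ^ (ε - 1) + (2 * Real.pi - θ) ^ (ε - 1)) := by
    linarith
  gcongr

lemma cs_bound {a : ℝ} (ha0 : 0 ≤ a) (ha1 : a < 1) {ε : ℝ} (he0 : 0 < ε) (he1 : ε ≤ 1) :
    ∃ K : ℝ, 0 ≤ K ∧ ∀ s : ℝ, 0 ≤ s → s ≤ 1 → ∀ k : ℕ,
      |cs a s (k + 1)| ≤ k.factorial * (K * ((k : ℝ) + 2) ^ ε) := by
  obtain ⟨C, hC, hb⟩ := gg_deriv_bound ha0 ha1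
  set I := ∫ θ in (0 : ℝ)..(2 * Real.pi), WW ε θ with hI
  have hI0 : 0 ≤ I := by
    apply intervalIntegral.integral_nonneg Real.two_pi_pos.le
    intro u hu
    have := Real.rpow_nonneg hu.1 (ε - 1)
    have := Real.rpow_nonneg (by linarith [hu.2] : 0 ≤ 2 * Real.pi - u) (ε - 1)
    unfold WW; linarith
  refine ⟨Real.exp 1 * C * I, by positivity, fun s hs0 hs1 k => ?_⟩
  set r : ℝ := 1 - 1 / ((k : ℝ) + 2) with hrdef
  have hk2 : (0 : ℝ) < (k : ℝ) + 2 := by positivity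
  have hr : 1 / 2 ≤ r := by
    have : 1 / ((k : ℝ) + 2) ≤ 1 / 2 := by
      apply one_div_le_one_div_of_le (by norm_num)
      have : (0 : ℝ) ≤ k := Nat.cast_nonneg k
      linarith
    linarith
  have hr1 : r < 1 := by
    have : 0 < 1 / ((k : ℝ) + 2) := by positivity
    linarith
  have hr0 : 0 < r := by linarith
  have hdiff : DiffContOnCl ℂ (deriv (gg a s)) (Metric.ball 0 r) := by
    apply DifferentiableOn.diffContOnCl
    apply ((gg_diff a hs0 hs1).deriv Metric.isOpen_ball).mono
    exact (Metric.closure_ball_subset_closedBall).trans (Metric.closedBall_subset_ball hr1)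
  have hcau := hdiff.circleIntegral_one_div_sub_center_pow_smul hr0 k
  rw [← iteratedDeriv_succ', gg_iter_zero a hs0 hs1] at hcau
  have hn := congrArg norm hcau
  have hle : ‖∮ (z : ℂ) in C(0, r), (1 / (z - 0) ^ (k + 1)) • deriv (gg a s) z‖ ≤
      ∫ θ in (0 : ℝ)..(2 * Real.pi), (r ^ k)⁻¹ * C * (1 - r) ^ (-ε) * WW ε θ := by
    unfold circleIntegral
    apply intervalIntegral.norm_integral_le_of_norm_le Real.two_pi_pos.le
    · have hae : ∀ᵐ θ : ℝ, θ ≠ 2 * Real.pi := by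
        exact MeasureTheory.compl_mem_ae_iff.2 (MeasureTheory.measure_singleton _)
      filter_upwards [hae] with θ hθ hθ2
      have h2 : θ < 2 * Real.pi := lt_of_le_of_ne hθ2.2 hθ
      have hmem : circleMap 0 r θ ∈ Metric.ball (0 : ℂ) 1 := by
        rw [mem_ball_zero_iff, norm_circleMap_zero, abs_of_pos hr0]
        exact hr1
      have hb2 := hb s hs0 hs1 _ hmem
      have hc := circ_inv he0 he1 hr hr1 hθ2.1 h2
      rw [norm_smul, norm_smul, sub_zero, norm_div, norm_one, norm_pow, deriv_circleMap, norm_mul,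
        Complex.norm_I, norm_circleMap_zero, abs_of_pos hr0]
      calc r * 1 * (1 / r ^ (k + 1) * ‖deriv (gg a s) (circleMap 0 r θ)‖)
          ≤ r * 1 * (1 / r ^ (k + 1) * (C / ‖1 - circleMap 0 r θ‖)) := by gcongr
        _ = (r ^ k)⁻¹ * C * (1 / ‖1 - circleMap 0 r θ‖) := by
            rw [pow_succ]
            have h8 : r * 1 * (1 / (r ^ k * r)) = (r ^ k)⁻¹ := by field_simp
            rw [← h8]; ring
        _ ≤ (r ^ k)⁻¹ * C * ((1 - r) ^ (-ε) * WW ε θ) := by gcongr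
        _ = _ := by ring
    · exact (WW_int he0).const_mul _
  rw [hn, intervalIntegral.integral_const_mul, ← hI, norm_smul, norm_div, Complex.norm_real,
    Complex.norm_natCast, norm_mul, norm_mul, Complex.norm_I, Complex.norm_real,
    Real.norm_of_nonneg Real.pi_pos.le, Complex.norm_ofNat, Real.norm_eq_abs] at hle
  have hrk : (r ^ k)⁻¹ ≤ Real.exp 1 := by
    have h1 : r⁻¹ = 1 / ((k : ℝ) + 1) + 1 := by
      rw [hrdef]
      have : (k : ℝ) + 1 ≠ 0 := by positivity
      have h5 : 1 - 1 / ((k : ℝ) + 2) = ((k : ℝ) + 1) / (k + 2) := by field_simp; ring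
      rw [h5, inv_div]; field_simp; ring
    rw [← inv_pow, h1]
    calc (1 / ((k : ℝ) + 1) + 1) ^ k ≤ (Real.exp (1 / ((k : ℝ) + 1))) ^ k := by
          gcongr; exact Real.add_one_le_exp _
      _ = Real.exp (k * (1 / ((k : ℝ) + 1))) := (Real.exp_nat_mul _ _).symm
      _ ≤ Real.exp 1 := by
          gcongr
          rw [mul_one_div, div_le_one (by positivity)]; linarith
  have h1r : (1 - r) ^ (-ε) = ((k : ℝ) + 2) ^ ε := by
    rw [hrdef, sub_sub_cancel, one_div, Real.inv_rpow hk2.le, Real.rpow_neg hk2.le, inv_inv]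
  rw [h1r] at hle
  have hpi := Real.pi_gt_three
  have hf : (0 : ℝ) < k.factorial := by exact_mod_cast k.factorial_pos
  have h9 : |cs a s (k + 1)| / k.factorial ≤ Real.exp 1 * C * I * ((k : ℝ) + 2) ^ ε := by
    calc |cs a s (k + 1)| / k.factorial
        ≤ 2 * Real.pi * (|cs a s (k + 1)| / k.factorial) :=
          le_mul_of_one_le_left (by positivity) (by linarith)
      _ = 2 * Real.pi * 1 / k.factorial * |cs a s (k + 1)| := by ring
      _ ≤ (r ^ k)⁻¹ * C * ((k : ℝ) + 2) ^ ε * I := hle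
      _ ≤ Real.exp 1 * C * ((k : ℝ) + 2) ^ ε * I := by gcongr
      _ = _ := by ring
  rw [div_le_iff₀ hf] at h9
  linarith

end EF

namespace EF
open MeasureTheory Set

noncomputable def RP (x : ℝ) (k : ℕ) : ℝ := x * ∏ i ∈ Finset.range k, (x + i + 1)

lemma RP_pos {x : ℝ} (hx : 0 < x) (k : ℕ) : 0 < RP x k := by
  unfold RP
  have : 0 < ∏ i ∈ Finset.range k, (x + i + 1) := Finset.prod_pos fun i _ => by positivity
  positivity

lemma RP_succ (x : ℝ) (k : ℕ) : RP x (k + 1) = RP x k * (x + k + 1) := by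
  rw [RP, RP, Finset.prod_range_succ]; ring

lemma RP_succ' (x : ℝ) (k : ℕ) : RP x (k + 1) = x * RP (x + 1) k := by
  rw [RP, RP, Finset.prod_range_succ']
  simp only [Nat.cast_zero, add_zero]
  rw [mul_comm _ (x + 1)]
  congr 2
  refine Finset.prod_congr rfl fun i _ => ?_
  push_cast; ring

lemma RP_eq (x : ℝ) (k : ℕ) : RP x k = ∏ i ∈ Finset.range (k + 1), (x + i) := by
  rw [RP, Finset.prod_range_succ']
  simp only [Nat.cast_zero, add_zero]
  rw [mul_comm]
  congr 1
  refine Finset.prod_congr rfl fun i _ => ?_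
  push_cast; ring

lemma beta {x : ℝ} (hx : 0 < x) (k : ℕ) :
    IntegrableOn (fun t : ℝ => Real.exp (-(x * t)) * (1 - Real.exp (-t)) ^ k) (Ioi 0) ∧
    ∫ t in Ioi (0 : ℝ), Real.exp (-(x * t)) * (1 - Real.exp (-t)) ^ k = k.factorial / RP x k := by
  induction k generalizing x with
  | zero =>
    have h := integrableOn_exp_mul_Ioi (a := -x) (by linarith) 0
    have h2 := integral_exp_mul_Ioi (a := -x) (by linarith) 0
    simp only [neg_mul] at h h2
    constructor
    · simpa using h
    · simp only [pow_zero, mul_one]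
      rw [h2]; simp [RP]
  | succ k ih =>
    obtain ⟨i1, e1⟩ := ih hx
    obtain ⟨i2, e2⟩ := ih (x := x + 1) (by linarith)
    have hf : (fun t : ℝ => Real.exp (-(x * t)) * (1 - Real.exp (-t)) ^ (k + 1)) =
        fun t => Real.exp (-(x * t)) * (1 - Real.exp (-t)) ^ k -
          Real.exp (-((x + 1) * t)) * (1 - Real.exp (-t)) ^ k := by
      ext t
      rw [show -((x + 1) * t) = -(x * t) + -t by ring, Real.exp_add]
      ring
    rw [hf]
    refine ⟨i1.sub i2, ?_⟩
    rw [integral_sub i1 i2, e1, e2]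
    have p1 := RP_pos hx k
    have p2 := RP_pos (by linarith : 0 < x + 1) k
    have r1 := RP_succ x k
    have r2 := RP_succ' x k
    have p3 := RP_pos hx (k + 1)
    have q1 : RP x k = RP x (k + 1) / (x + k + 1) := by
      rw [r1]; field_simp
    have q2 : RP (x + 1) k = RP x (k + 1) / x := by
      rw [r2]; field_simp
    rw [q1, q2, Nat.factorial_succ]
    push_cast
    field_simp
    ring

lemma sum_bound {a : ℝ} (ha0 : 0 ≤ a) (ha1 : a < 1) {x : ℝ} (hx : 0 < x) :
    ∃ B : ℕ → ℝ, Summable B ∧ ∀ s : ℝ, 0 ≤ s → s ≤ 1 → ∀ k : ℕ, |cs a s k| / RP x k ≤ B k := by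
  set ε := min (x / 2) 1 with hε
  have he0 : 0 < ε := lt_min (by linarith) one_pos
  have he1 : ε ≤ 1 := min_le_right _ _
  have hex : ε ≤ x / 2 := min_le_left _ _
  obtain ⟨K, hK, hb⟩ := cs_bound ha0 ha1 he0 he1
  obtain ⟨G, hG⟩ := (Real.GammaSeq_tendsto_Gamma x).bddAbove_range
  have hG' : ∀ n : ℕ, ((n : ℝ) + 1) ^ x * (n + 1).factorial / RP x (n + 1) ≤ G := by
    intro n
    have := hG ⟨n + 1, rfl⟩
    rw [Real.GammaSeq, ← RP_eq] at this
    exact_mod_cast this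
  have hG0 : 0 ≤ G := le_trans (by have := RP_pos hx 1; positivity) (hG' 0)
  refine ⟨fun k => Nat.casesOn k (|bernPoly 1 a| / x)
    (fun n => K * G * 2 ^ ε * (((n + 1 : ℕ) : ℝ) ^ (-1 - x + ε))), ?_, ?_⟩
  · rw [← summable_nat_add_iff 1]
    apply Summable.mul_left
    exact (summable_nat_add_iff 1).2 (Real.summable_nat_rpow.2 (by linarith))
  · intro s hs0 hs1 k
    cases k with
    | zero =>
      show _ ≤ |bernPoly 1 a| / x
      have : |cs a s 0| ≤ |bernPoly 1 a| := by
        simp only [cs, stirling1Unsigned, zero_add, Finset.sum_range_one, pow_one, abs_mul,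
          abs_of_nonneg hs0, Nat.cast_one, abs_one, one_mul]
        exact mul_le_of_le_one_left (abs_nonneg _) hs1
      simp only [RP, Finset.range_zero, Finset.prod_empty, mul_one]
      gcongr
    | succ n =>
      show _ ≤ K * G * 2 ^ ε * (((n + 1 : ℕ) : ℝ) ^ (-1 - x + ε))
      have hp := RP_pos hx (n + 1)
      have hn : (0 : ℝ) < (n : ℝ) + 1 := by positivity
      have h1 := hb s hs0 hs1 n
      have h2 : ((n : ℝ) + 2) ^ ε ≤ 2 ^ ε * ((n : ℝ) + 1) ^ ε := by
        rw [← Real.mul_rpow (by norm_num) hn.le]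
        apply Real.rpow_le_rpow (by positivity) (by linarith) he0.le
      have h3 := hG' n
      push_cast
      calc |cs a s (n + 1)| / RP x (n + 1)
          ≤ n.factorial * (K * ((n : ℝ) + 2) ^ ε) / RP x (n + 1) := by gcongr
        _ ≤ n.factorial * (K * (2 ^ ε * ((n : ℝ) + 1) ^ ε)) / RP x (n + 1) := by gcongr
        _ = K * 2 ^ ε * (((n : ℝ) + 1) ^ ε * ((n : ℝ) + 1) ^ (-x) * ((n : ℝ) + 1) ^ (-1 : ℝ)) *
            (((n : ℝ) + 1) ^ x * (n + 1).factorial / RP x (n + 1)) := by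
          rw [Nat.factorial_succ, Real.rpow_neg hn.le, Real.rpow_neg_one]
          push_cast
          have : ((n : ℝ) + 1) ^ x ≠ 0 := (Real.rpow_pos_of_pos hn x).ne'
          field_simp
        _ ≤ K * 2 ^ ε * (((n : ℝ) + 1) ^ ε * ((n : ℝ) + 1) ^ (-x) * ((n : ℝ) + 1) ^ (-1 : ℝ)) * G := by
          gcongr
        _ = _ := by
          rw [← Real.rpow_add hn, ← Real.rpow_add hn,
            show ε + -x + -1 = -1 - x + ε by ring]
          ring

lemma gg_exp {a s t : ℝ} (ht : 0 < t) :
    gg a s ((1 - Real.exp (-t) : ℝ) : ℂ) = s * deriv (FF a) ((s * t : ℝ) : ℂ) := by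
  rw [gg]
  have : (1 : ℂ) - ((1 - Real.exp (-t) : ℝ) : ℂ) = ((Real.exp (-t) : ℝ) : ℂ) := by
    push_cast; ring
  rw [this, ← Complex.ofReal_log (Real.exp_pos _).le, Real.log_exp]
  congr 2
  push_cast; ring

lemma cs_hasSum {a : ℝ} (ha0 : 0 ≤ a) (ha1 : a < 1) {x : ℝ} (hx : 0 < x) {s : ℝ}
    (hs0 : 0 ≤ s) (hs1 : s ≤ 1) :
    HasSum (fun k => ((cs a s k / RP x k : ℝ) : ℂ))
      (∫ t in Ioi (0 : ℝ), (Real.exp (-(x * t)) : ℂ) * (s * deriv (FF a) ((s * t : ℝ) : ℂ))) := by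
  obtain ⟨B, hB, hBb⟩ := sum_bound ha0 ha1 hx
  set f : ℕ → ℝ → ℂ := fun k t =>
    ((cs a s k / k.factorial * (Real.exp (-(x * t)) * (1 - Real.exp (-t)) ^ k) : ℝ) : ℂ) with hf
  have hint : ∀ k, Integrable (f k) (volume.restrict (Ioi 0)) := fun k =>
    (((beta hx k).1).const_mul _).ofReal
  have hI : ∀ k, ∫ t in Ioi (0 : ℝ), f k t = ((cs a s k / RP x k : ℝ) : ℂ) := by
    intro k
    simp only [hf]
    rw [integral_complex_ofReal, integral_const_mul, (beta hx k).2]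
    have : (k.factorial : ℝ) ≠ 0 := by exact_mod_cast k.factorial_ne_zero
    congr 1; field_simp
  have hN : ∀ k, ∫ t in Ioi (0 : ℝ), ‖f k t‖ = |cs a s k| / RP x k := by
    intro k
    have : ∫ t in Ioi (0 : ℝ), ‖f k t‖ = ∫ t in Ioi (0 : ℝ), |cs a s k| / k.factorial *
        (Real.exp (-(x * t)) * (1 - Real.exp (-t)) ^ k) := by
      apply setIntegral_congr_fun measurableSet_Ioi
      intro t ht
      have h1 : 0 ≤ 1 - Real.exp (-t) := by
        have : Real.exp (-t) ≤ 1 := Real.exp_le_one_iff.2 (by have : 0 < t := ht; linarith)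
        linarith
      simp only [hf]
      rw [Complex.norm_real, Real.norm_eq_abs, abs_mul, abs_div, Nat.abs_cast,
        abs_of_nonneg (by positivity : 0 ≤ Real.exp (-(x * t)) * (1 - Real.exp (-t)) ^ k)]
    rw [this, integral_const_mul, (beta hx k).2]
    have : (k.factorial : ℝ) ≠ 0 := by exact_mod_cast k.factorial_ne_zero
    field_simp
  have hS : Summable fun k => ∫ t in Ioi (0 : ℝ), ‖f k t‖ := by
    simp only [hN]
    exact Summable.of_nonneg_of_le (fun k => div_nonneg (abs_nonneg _) (RP_pos hx k).le)
      (hBb s hs0 hs1) hB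
  have h := hasSum_integral_of_summable_integral_norm hint hS
  simp only [hI] at h
  suffices hv : (∫ t in Ioi (0 : ℝ), (Real.exp (-(x * t)) : ℂ) *
      (s * deriv (FF a) ((s * t : ℝ) : ℂ))) = ∫ t in Ioi (0 : ℝ), ∑' k, f k t by
    rw [hv]; exact h
  apply setIntegral_congr_fun measurableSet_Ioi
  intro t ht
  have ht : 0 < t := ht
  have hexp : Real.exp (-t) < 1 := Real.exp_lt_one_iff.2 (by linarith)
  have hmem : ((1 - Real.exp (-t) : ℝ) : ℂ) ∈ Metric.ball (0 : ℂ) 1 := by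
    rw [mem_ball_zero_iff, Complex.norm_real, Real.norm_of_nonneg (by linarith)]
    linarith [Real.exp_pos (-t)]
  have hT := Complex.hasSum_taylorSeries_on_ball (gg_diff a hs0 hs1) hmem
  rw [gg_exp ht] at hT
  have hT2 := hT.mul_left (Real.exp (-(x * t)) : ℂ)
  show (Real.exp (-(x * t)) : ℂ) * (s * deriv (FF a) ((s * t : ℝ) : ℂ)) = ∑' k, f k t
  rw [← hT2.tsum_eq]
  refine tsum_congr fun k => ?_
  rw [gg_iter_zero a hs0 hs1]
  simp only [hf, smul_eq_mul, sub_zero]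
  push_cast
  ring

end EF

namespace EF
open MeasureTheory Set

lemma int_t_exp {c : ℝ} (hc : 0 < c) :
    IntegrableOn (fun t : ℝ => t * Real.exp (-(c * t))) (Ioi 0) ∧
    ∫ t in Ioi (0 : ℝ), t * Real.exp (-(c * t)) = 1 / c ^ 2 := by
  have h := Real.integral_rpow_mul_exp_neg_mul_Ioi (a := 2) (r := c) two_pos hc
  have h1 : ∫ t in Ioi (0 : ℝ), t * Real.exp (-(c * t)) = 1 / c ^ 2 := by
    have e : (2 : ℝ) - 1 = 1 := by norm_num
    simp only [e, Real.rpow_one] at h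
    rw [h, Real.Gamma_two, mul_one, Real.rpow_two, one_div_pow]
  refine ⟨?_, h1⟩
  by_contra hn
  have := integral_undef hn
  rw [h1] at this
  have : 0 < 1 / c ^ 2 := by positivity
  linarith

lemma exp_int {x : ℝ} (hx : 0 < x) : IntegrableOn (fun t : ℝ => (Real.exp (-(x * t)) : ℂ)) (Ioi 0) := by
  have h := integrableOn_exp_mul_Ioi (a := -x) (by linarith) 0
  simp only [neg_mul] at h
  exact h.ofReal

lemma real_mem {s t : ℝ} : ((s * t : ℝ) : ℂ) ∈ St := mem_St_of (by simp)

lemma FF_series {a s t : ℝ} (hs : 0 < s) (ht : 0 < t) :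
    HasSum (fun m : ℕ => ((s * t * Real.exp (-((1 - a + m) * (s * t))) : ℝ) : ℂ))
      (FF a ((s * t : ℝ) : ℂ)) := by
  have hy : 0 < s * t := mul_pos hs ht
  generalize s * t = y at hy ⊢
  have hq : Real.exp (-y) < 1 := Real.exp_lt_one_iff.2 (by linarith)
  have h := (hasSum_geometric_of_lt_one (Real.exp_pos (-y)).le hq).mul_left
    (y * Real.exp (-((1 - a) * y)))
  have hF : FF a (y : ℂ) = ((y * Real.exp (-((1 - a) * y)) * (1 - Real.exp (-y))⁻¹ : ℝ) : ℂ) := by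
    have h1 := FF_mul a (t := (y : ℂ)) (mem_St_of (by simp))
    have h2 : (Complex.exp y - 1) = ((Real.exp y - 1 : ℝ) : ℂ) := by push_cast; rfl
    have h3 : (y : ℂ) * Complex.exp (a * y) = ((y * Real.exp (a * y) : ℝ) : ℂ) := by push_cast; rfl
    have h4 : 0 < Real.exp y - 1 := by
      have := Real.one_lt_exp_iff.2 hy
      linarith
    rw [h2, h3] at h1
    have h5 : ((Real.exp y - 1 : ℝ) : ℂ) ≠ 0 := by exact_mod_cast h4.ne'
    rw [eq_div_of_mul_eq h5 h1, ← Complex.ofReal_div]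
    congr 1
    have h6 : Real.exp (-((1 - a) * y)) = Real.exp (a * y) * Real.exp (-y) := by
      rw [← Real.exp_add]; congr 1; ring
    have h7 : 1 - Real.exp (-y) ≠ 0 := by linarith
    have h8 : Real.exp y * Real.exp (-y) = 1 := by rw [← Real.exp_add]; simp
    rw [h6, ← div_eq_mul_inv, div_eq_div_iff h4.ne' h7]
    linear_combination (-y * Real.exp (a * y)) * h8
  rw [hF]
  rw [Complex.hasSum_ofReal]
  have e : (fun m : ℕ => y * Real.exp (-((1 - a + m) * y))) =
      fun m : ℕ => y * Real.exp (-((1 - a) * y)) * Real.exp (-y) ^ m := by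
    ext m
    rw [← Real.exp_nat_mul, mul_assoc y, ← Real.exp_add]
    congr 2; ring
  rw [e]; exact h

lemma lap {a : ℝ} (ha0 : 0 ≤ a) (ha1 : a < 1) {x : ℝ} (hx : 0 < x) {s : ℝ}
    (hs0 : 0 < s) (hs1 : s ≤ 1) :
    HasSum (fun m : ℕ => ((x * s / (x + (1 - a + m) * s) ^ 2 : ℝ) : ℂ))
      (1 + ∫ t in Ioi (0 : ℝ), (Real.exp (-(x * t)) : ℂ) * (s * deriv (FF a) ((s * t : ℝ) : ℂ))) := by
  obtain ⟨M, hM, hF, hF'⟩ := FF_iter_bound ha0 ha1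
  have hcont : Continuous fun t : ℝ => FF a ((s * t : ℝ) : ℂ) := by
    rw [continuous_iff_continuousAt]
    intro t
    have h1 : ContinuousAt (FF a) ((s * t : ℝ) : ℂ) :=
      (FF_diff a).continuousOn.continuousAt (isOpen_St.mem_nhds real_mem)
    exact ContinuousAt.comp (f := fun t : ℝ => ((s * t : ℝ) : ℂ)) h1 (by fun_prop)
  have hcont' : Continuous fun t : ℝ => deriv (FF a) ((s * t : ℝ) : ℂ) := by
    rw [continuous_iff_continuousAt]
    intro t
    have h1 : ContinuousAt (deriv (FF a)) ((s * t : ℝ) : ℂ) :=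
      ((FF_diff a).deriv isOpen_St).continuousOn.continuousAt (isOpen_St.mem_nhds real_mem)
    exact ContinuousAt.comp (f := fun t : ℝ => ((s * t : ℝ) : ℂ)) h1 (by fun_prop)
  have hb1 : ∀ t : ℝ, 0 < t → ‖FF a ((s * t : ℝ) : ℂ)‖ ≤ M := by
    intro t ht
    have : 0 < s * t := mul_pos hs0 ht
    apply hF <;> simp <;> linarith
  have hb2 : ∀ t : ℝ, 0 < t → ‖(s : ℂ) * deriv (FF a) ((s * t : ℝ) : ℂ)‖ ≤ M := by
    intro t ht
    have : 0 < s * t := mul_pos hs0 ht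
    have h := hF' 1 ((s * t : ℝ) : ℂ) (by simp; linarith) (by simp)
    rw [iteratedDeriv_one, Nat.factorial_one, Nat.cast_one, one_mul] at h
    rw [norm_mul, Complex.norm_real, Real.norm_of_nonneg hs0.le]
    calc s * _ ≤ 1 * M := by gcongr
      _ = M := one_mul M
  have hi1 : IntegrableOn (fun t : ℝ => (Real.exp (-(x * t)) : ℂ) * FF a ((s * t : ℝ) : ℂ)) (Ioi 0) := by
    refine Integrable.mul_bdd (c := M) (exp_int hx) hcont.aestronglyMeasurable ?_
    filter_upwards [ae_restrict_mem measurableSet_Ioi] with t ht using hb1 t ht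
  have hi2 : IntegrableOn (fun t : ℝ => (Real.exp (-(x * t)) : ℂ) *
      (s * deriv (FF a) ((s * t : ℝ) : ℂ))) (Ioi 0) := by
    refine Integrable.mul_bdd (c := M) (exp_int hx) (hcont'.const_mul _).aestronglyMeasurable ?_
    filter_upwards [ae_restrict_mem measurableSet_Ioi] with t ht using hb2 t ht
  have hexpc : Continuous fun t : ℝ => (Real.exp (-(x * t)) : ℂ) := by fun_prop
  have hft : ∫ t in Ioi (0 : ℝ), (-(x : ℂ) * ((Real.exp (-(x * t)) : ℂ) * FF a ((s * t : ℝ) : ℂ)) +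
      (Real.exp (-(x * t)) : ℂ) * (s * deriv (FF a) ((s * t : ℝ) : ℂ))) = 0 - 1 := by
    have h := integral_Ioi_of_hasDerivAt_of_tendsto (a := 0) (m := 0)
      (f := fun t : ℝ => (Real.exp (-(x * t)) : ℂ) * FF a ((s * t : ℝ) : ℂ))
      (f' := fun t : ℝ => (-(x : ℂ) * ((Real.exp (-(x * t)) : ℂ) * FF a ((s * t : ℝ) : ℂ)) +
      (Real.exp (-(x * t)) : ℂ) * (s * deriv (FF a) ((s * t : ℝ) : ℂ))))
      (hexpc.mul hcont).continuousWithinAt ?_ ((hi1.const_mul _).add hi2) ?_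
    · rw [h]; simp [FF_zero]
    · intro t _
      have d1 : HasDerivAt (fun t : ℝ => (Real.exp (-(x * t)) : ℂ))
          ((Real.exp (-(x * t)) * -(x * 1) : ℝ) : ℂ) t :=
        (((hasDerivAt_id t).const_mul x).fun_neg.exp).ofReal_comp
      have d2 : HasDerivAt (fun t : ℝ => ((s * t : ℝ) : ℂ)) ((s * 1 : ℝ) : ℂ) t :=
        ((hasDerivAt_id t).const_mul s).ofReal_comp
      have d3 : HasDerivAt (FF a) (deriv (FF a) ((s * t : ℝ) : ℂ)) ((s * t : ℝ) : ℂ) :=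
        ((FF_diff a).differentiableAt (isOpen_St.mem_nhds real_mem)).hasDerivAt
      have d4 := HasDerivAt.comp_of_eq t d3 d2 rfl
      refine (d1.mul d4).congr_deriv ?_
      push_cast
      simp only [Function.comp_apply]
      push_cast
      ring
    · have hlim : Filter.Tendsto (fun t : ℝ => Real.exp (-(x * t)) * M) Filter.atTop (nhds 0) := by
        have : Filter.Tendsto (fun t : ℝ => Real.exp (-(x * t))) Filter.atTop (nhds 0) :=
          Real.tendsto_exp_neg_atTop_nhds_zero.comp (Filter.tendsto_id.const_mul_atTop hx)
        simpa using this.mul_const M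
      apply squeeze_zero_norm' _ hlim
      filter_upwards [Filter.eventually_gt_atTop 0] with t ht
      rw [norm_mul, Complex.norm_real, Real.norm_of_nonneg (Real.exp_pos _).le]
      gcongr
      exact hb1 t ht
  rw [integral_add (hi1.const_mul _) hi2, integral_const_mul] at hft
  have hval : (1 + ∫ t in Ioi (0 : ℝ), (Real.exp (-(x * t)) : ℂ) *
      (s * deriv (FF a) ((s * t : ℝ) : ℂ))) =
      x * ∫ t in Ioi (0 : ℝ), (Real.exp (-(x * t)) : ℂ) * FF a ((s * t : ℝ) : ℂ) := by
    linear_combination hft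
  rw [hval]
  set c : ℕ → ℝ := fun m => x + (1 - a + m) * s with hc
  have hc0 : ∀ m, 0 < c m := by
    intro m
    have : 0 < 1 - a := by linarith
    simp only [hc]; positivity
  set f : ℕ → ℝ → ℂ := fun m t => ((s * (t * Real.exp (-(c m * t))) : ℝ) : ℂ) with hf
  have hint : ∀ m, Integrable (f m) (volume.restrict (Ioi 0)) := fun m =>
    ((int_t_exp (hc0 m)).1.const_mul s).ofReal
  have hI : ∀ m, ∫ t in Ioi (0 : ℝ), f m t = ((s / c m ^ 2 : ℝ) : ℂ) := by
    intro m
    simp only [hf]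
    rw [integral_complex_ofReal, integral_const_mul, (int_t_exp (hc0 m)).2, mul_one_div]
  have hN : ∀ m, ∫ t in Ioi (0 : ℝ), ‖f m t‖ = s / c m ^ 2 := by
    intro m
    rw [← mul_one_div, ← (int_t_exp (hc0 m)).2, ← integral_const_mul]
    apply setIntegral_congr_fun measurableSet_Ioi
    intro t ht
    have ht : 0 < t := ht
    simp only [hf]
    rw [Complex.norm_real, Real.norm_of_nonneg (by positivity)]
  have hS : Summable fun m => ∫ t in Ioi (0 : ℝ), ‖f m t‖ := by
    simp only [hN]
    have hp : 0 < min x s := lt_min hx hs0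
    have h0 : Summable fun m : ℕ => s / (min x s) ^ 2 * (1 / ((m + 1 : ℕ) : ℝ) ^ 2) :=
      ((summable_nat_add_iff 1).2 (Real.summable_one_div_nat_pow.2 one_lt_two)).mul_left _
    refine Summable.of_nonneg_of_le (fun m => by positivity) (fun m => ?_) h0
    rw [div_mul_div_comm, mul_one, ← mul_pow]
    gcongr
    simp only [hc]
    push_cast
    have h1 : min x s ≤ x := min_le_left _ _
    have h2 : min x s ≤ s := min_le_right _ _
    have h3 : (m : ℝ) * min x s ≤ m * s := by gcongr
    have h4 : 0 ≤ (1 - a) * s := mul_nonneg (by linarith) hs0.le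
    linarith
  have h := hasSum_integral_of_summable_integral_norm hint hS
  simp only [hI] at h
  have hv : (∫ t in Ioi (0 : ℝ), (Real.exp (-(x * t)) : ℂ) * FF a ((s * t : ℝ) : ℂ)) =
      ∫ t in Ioi (0 : ℝ), ∑' m, f m t := by
    apply setIntegral_congr_fun measurableSet_Ioi
    intro t ht
    show _ = ∑' m, f m t
    simp only
    rw [← ((FF_series (a := a) hs0 ht).mul_left (Real.exp (-(x * t)) : ℂ)).tsum_eq]
    refine tsum_congr fun m => ?_
    simp only [hf, hc]
    rw [← Complex.ofReal_mul]
    congr 1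
    rw [show -((x + (1 - a + m) * s) * t) = -(x * t) + -((1 - a + m) * (s * t)) by ring,
      Real.exp_add]
    ring
  rw [hv]
  have h2 := h.mul_left (x : ℂ)
  have e : (fun m : ℕ => ((x * s / (x + (1 - a + m) * s) ^ 2 : ℝ) : ℂ)) =
      fun m : ℕ => (x : ℂ) * ((s / c m ^ 2 : ℝ) : ℂ) := by
    ext m
    simp only [hc]
    rw [← Complex.ofReal_mul, mul_div_assoc]
  rw [e]; exact h2

end EF

namespace EF
open MeasureTheory Set

/-- `s(v) = 1/(1+v²)`. -/
noncomputable def yy (v : ℝ) : ℝ := (1 + v ^ 2)⁻¹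

lemma yy_pos (v : ℝ) : 0 < yy v := by unfold yy; positivity

lemma yy_le (v : ℝ) : yy v ≤ 1 := by
  unfold yy
  exact inv_le_one_of_one_le₀ (by nlinarith [sq_nonneg v])

lemma yy_cont : Continuous yy := by
  unfold yy
  exact Continuous.inv₀ (by fun_prop) (fun v => by positivity)

lemma yy_int : Integrable yy := integrable_inv_one_add_sq

lemma yy_integral : ∫ v, yy v = Real.pi := integral_univ_inv_one_add_sq

lemma yy_deriv (v : ℝ) : HasDerivAt yy (-(2 * v) * yy v ^ 2) v := by
  have h : HasDerivAt (fun v : ℝ => 1 + v ^ 2) (2 * v) v := by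
    simpa using (hasDerivAt_pow 2 v).const_add 1
  have := h.fun_inv (by positivity)
  refine this.congr_deriv ?_
  unfold yy
  rw [inv_pow, div_eq_mul_inv]

lemma yy_pow_int (n : ℕ) : Integrable (fun v => yy v ^ (n + 1)) := by
  refine yy_int.mono' (yy_cont.pow _).aestronglyMeasurable (Filter.Eventually.of_forall fun v => ?_)
  rw [Real.norm_of_nonneg (pow_nonneg (yy_pos v).le _), pow_succ]
  exact mul_le_of_le_one_left (yy_pos v).le (pow_le_one₀ (yy_pos v).le (yy_le v))

lemma tend_aux {l : Filter ℝ} (hl : Filter.Tendsto (fun v : ℝ => |v|) l Filter.atTop) {h : ℝ → ℝ}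
    {C : ℝ} (hh : ∀ v, |h v| ≤ C * (|v| * yy v)) : Filter.Tendsto h l (nhds 0) := by
  have h1 : Filter.Tendsto (fun v : ℝ => |C| * |v|⁻¹) l (nhds 0) := by
    simpa using (tendsto_inv_atTop_zero.comp hl).const_mul |C|
  apply squeeze_zero_norm' _ h1
  filter_upwards [hl.eventually_gt_atTop 0] with v hv
  rw [Real.norm_eq_abs]
  refine (hh v).trans ?_
  have h2 : |v| * yy v ≤ |v|⁻¹ := by
    rw [← mul_le_mul_iff_left₀ hv, inv_mul_cancel₀ hv.ne', mul_right_comm, ← sq, sq_abs]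
    unfold yy
    rw [← div_eq_mul_inv, div_le_one (by positivity)]
    linarith
  have h3 : 0 ≤ |v| * yy v := mul_nonneg (abs_nonneg _) (yy_pos v).le
  calc C * (|v| * yy v) ≤ |C| * (|v| * yy v) := by gcongr; exact le_abs_self C
    _ ≤ _ := by gcongr

lemma yy_rec (m : ℕ) : ∫ v, yy v ^ (m + 2) = (2 * m + 1) / (2 * m + 2) * ∫ v, yy v ^ (m + 1) := by
  have key := integral_of_hasDerivAt_of_tendsto (m := 0) (n := 0)
    (f := fun v : ℝ => v * yy v ^ (m + 1))
    (f' := fun v => -(2 * m + 1 : ℝ) * yy v ^ (m + 1) + (2 * m + 2 : ℝ) * yy v ^ (m + 2)) ?_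
    (((yy_pow_int m).const_mul _).add ((yy_pow_int (m + 1)).const_mul _))
    (tend_aux (C := 1) Filter.tendsto_abs_atBot_atTop ?_)
    (tend_aux (C := 1) Filter.tendsto_abs_atTop_atTop ?_)
  · rw [integral_add ((yy_pow_int m).const_mul _) ((yy_pow_int (m + 1)).const_mul _),
      integral_const_mul, integral_const_mul] at key
    field_simp
    linarith
  · intro v
    have := (hasDerivAt_id v).fun_mul ((yy_deriv v).fun_pow (m + 1))
    refine this.congr_deriv ?_
    have h2 : v ^ 2 * yy v = 1 - yy v := by
      unfold yy; field_simp; ring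
    simp only [id, Nat.add_sub_cancel]
    push_cast
    linear_combination (-2 * (m + 1) * yy v ^ (m + 1)) * h2
  all_goals
    intro v
    rw [abs_mul, one_mul, abs_of_nonneg (pow_nonneg (yy_pos v).le _), pow_succ]
    gcongr
    exact mul_le_of_le_one_left (yy_pos v).le (pow_le_one₀ (yy_pos v).le (yy_le v))

noncomputable def qq (l : ℕ) : ℝ :=
  (Nat.doubleFactorial (2 * l + 1) : ℝ) / (2 ^ (l + 1) * ((l + 1).factorial : ℝ))

lemma yy_moment (l : ℕ) : ∫ v, yy v * yy v ^ (l + 1) = Real.pi * qq l := by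
  have e : ∀ l : ℕ, (fun v => yy v * yy v ^ (l + 1)) = fun v => yy v ^ (l + 2) := by
    intro l; ext v; ring
  rw [e]
  induction l with
  | zero =>
    rw [yy_rec]
    simp [yy_integral, qq, mul_comm]
  | succ l ih =>
    rw [yy_rec, ih]
    unfold qq
    rw [show 2 * (l + 1) + 1 = (2 * l + 1) + 2 by ring, Nat.doubleFactorial_add_two,
      Nat.factorial_succ (l + 1)]
    push_cast
    field_simp
    ring

lemma ker_int {x c : ℝ} (hx : 0 < x) (hc : 0 < c) :
    Integrable (fun v => yy v * (x * yy v / (x + c * yy v) ^ 2)) := by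
  have hcont : Continuous (fun v => yy v * (x * yy v / (x + c * yy v) ^ 2)) := by
    refine yy_cont.mul (Continuous.div (yy_cont.const_mul _) ?_ ?_)
    · exact (continuous_const.add (yy_cont.const_mul _)).pow 2
    · intro v; have := yy_pos v; positivity
  refine (yy_int.const_mul (1 / x)).mono' hcont.aestronglyMeasurable
    (Filter.Eventually.of_forall fun v => ?_)
  have h1 := yy_pos v
  have h2 := yy_le v
  rw [Real.norm_of_nonneg (by positivity)]
  have : x * yy v / (x + c * yy v) ^ 2 ≤ 1 / x := by
    rw [div_le_div_iff₀ (by positivity) hx]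
    have : 0 < c * yy v := by positivity
    have h5 : x * x * yy v ≤ x * x := mul_le_of_le_one_right (by positivity) h2
    nlinarith [mul_pos hx this, sq_nonneg (c * yy v)]
  calc yy v * (x * yy v / (x + c * yy v) ^ 2) ≤ yy v * (1 / x) := by gcongr
    _ = _ := by ring

lemma ker {x c : ℝ} (hx : 0 < x) (hc : 0 < c) :
    ∫ v, yy v * (x * yy v / (x + c * yy v) ^ 2) =
      Real.pi * (Real.sqrt x / 2 * (x + c) ^ (-(3 : ℝ) / 2)) := by
  set A := x + c with hA
  have hA0 : 0 < A := by positivity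
  set p := Real.sqrt x with hp
  set q := Real.sqrt A with hq
  have hp0 : 0 < p := Real.sqrt_pos.2 hx
  have hq0 : 0 < q := Real.sqrt_pos.2 hA0
  have hpx : x = p ^ 2 := (Real.sq_sqrt hx.le).symm
  have hqA : A = q ^ 2 := (Real.sq_sqrt hA0.le).symm
  have hq3 : A ^ (-(3 : ℝ) / 2) = (q ^ 3)⁻¹ := by
    rw [neg_div, Real.rpow_neg hA0.le, hq, Real.sqrt_eq_rpow, ← Real.rpow_natCast,
      ← Real.rpow_mul hA0.le]
    norm_num
  have hfun : (fun v => yy v * (x * yy v / (x + c * yy v) ^ 2)) =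
      fun v => p ^ 2 / (p ^ 2 * v ^ 2 + q ^ 2) ^ 2 := by
    ext v
    rw [← hqA, ← hpx, hA]
    unfold yy
    have h1 : x * v ^ 2 + (x + c) ≠ 0 := by positivity
    have h2 : x + c * (1 + v ^ 2)⁻¹ = (x * v ^ 2 + (x + c)) * (1 + v ^ 2)⁻¹ := by
      field_simp; ring
    rw [h2]
    field_simp
  have hint := ker_int hx hc
  rw [hfun] at hint ⊢
  have key := integral_of_hasDerivAt_of_tendsto
    (m := 0 + p / (2 * q ^ 3) * (-(Real.pi / 2))) (n := 0 + p / (2 * q ^ 3) * (Real.pi / 2))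
    (f := fun v : ℝ => p ^ 2 * v / (2 * q ^ 2 * (p ^ 2 * v ^ 2 + q ^ 2)) +
      p / (2 * q ^ 3) * Real.arctan (p / q * v)) (f' := fun v => p ^ 2 / (p ^ 2 * v ^ 2 + q ^ 2) ^ 2)
    ?_ hint ?_ ?_
  · rw [key, hq3]; field_simp; ring
  · intro v
    have hne : p ^ 2 * v ^ 2 + q ^ 2 ≠ 0 := by positivity
    have d1 : HasDerivAt (fun v : ℝ => 2 * q ^ 2 * (p ^ 2 * v ^ 2 + q ^ 2))
        (2 * q ^ 2 * (p ^ 2 * (2 * v))) v := by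
      simpa using (((hasDerivAt_pow 2 v).const_mul (p ^ 2)).add_const (q ^ 2)).const_mul (2 * q ^ 2)
    have d2 : HasDerivAt (fun v : ℝ => p ^ 2 * v) (p ^ 2) v := by
      simpa using (hasDerivAt_id v).const_mul (p ^ 2)
    have d3 : HasDerivAt (fun v : ℝ => p / q * v) (p / q) v := by
      simpa using (hasDerivAt_id v).const_mul (p / q)
    have d4 := (d2.fun_div d1 (by positivity)).fun_add (d3.arctan.const_mul (p / (2 * q ^ 3)))
    refine d4.congr_deriv ?_
    have e : 1 + (p / q * v) ^ 2 = (p ^ 2 * v ^ 2 + q ^ 2) / q ^ 2 := by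
      field_simp; ring
    rw [e]
    field_simp
    ring
  all_goals
    have hb : ∀ v : ℝ, |p ^ 2 * v / (2 * q ^ 2 * (p ^ 2 * v ^ 2 + q ^ 2))| ≤
        (1 / (2 * q ^ 2)) * (|v| * yy v) := by
      intro v
      rw [abs_div, abs_mul, abs_of_pos (by positivity : 0 < p ^ 2),
        abs_of_pos (by positivity : 0 < 2 * q ^ 2 * (p ^ 2 * v ^ 2 + q ^ 2))]
      unfold yy
      have hpq : p ^ 2 ≤ q ^ 2 := by rw [← hpx, ← hqA]; linarith
      have : p ^ 2 * (1 + v ^ 2) ≤ p ^ 2 * v ^ 2 + q ^ 2 := by linarith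
      rw [show 1 / (2 * q ^ 2) * (|v| * (1 + v ^ 2)⁻¹) =
        p ^ 2 * |v| / (2 * q ^ 2 * (p ^ 2 * (1 + v ^ 2))) by field_simp]
      gcongr
  · refine (tend_aux Filter.tendsto_abs_atBot_atTop hb).add (Filter.Tendsto.const_mul _ ?_)
    exact (tendsto_nhds_of_tendsto_nhdsWithin Real.tendsto_arctan_atBot).comp
      (Filter.tendsto_id.const_mul_atBot (by positivity))
  · refine (tend_aux Filter.tendsto_abs_atTop_atTop hb).add (Filter.Tendsto.const_mul _ ?_)
    exact (tendsto_nhds_of_tendsto_nhdsWithin Real.tendsto_arctan_atTop).comp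
      (Filter.tendsto_id.const_mul_atTop (by positivity))

end EF

namespace EF
open MeasureTheory Set

lemma cs_real {a : ℝ} (ha0 : 0 ≤ a) (ha1 : a < 1) {x : ℝ} (hx : 0 < x) {s : ℝ}
    (hs0 : 0 < s) (hs1 : s ≤ 1) :
    ∃ J : ℝ, HasSum (fun k => cs a s k / RP x k) J ∧
      HasSum (fun m : ℕ => x * s / (x + (1 - a + m) * s) ^ 2) (1 + J) := by
  have h1 := cs_hasSum ha0 ha1 hx hs0.le hs1
  have h2 := lap ha0 ha1 hx hs0 hs1
  have h3 : Summable (fun k => cs a s k / RP x k) := by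
    have := h1.summable
    exact_mod_cast this
  obtain ⟨J, hJ⟩ := h3
  refine ⟨J, hJ, ?_⟩
  have h4 : HasSum (fun k => ((cs a s k / RP x k : ℝ) : ℂ)) (J : ℂ) := by exact_mod_cast hJ
  rw [h1.unique h4] at h2
  exact_mod_cast h2

/-- The coefficients obtained by averaging `cs`. -/
noncomputable def CC (a : ℝ) (k : ℕ) : ℝ :=
  ∑ l ∈ Finset.range (k + 1), (stirling1Unsigned k l : ℝ) * (qq l * bernPoly (l + 1) a)

lemma f_int (a x : ℝ) (k : ℕ) :
    Integrable (fun v => yy v * (cs a (yy v) k / RP x k)) ∧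
      ∫ v, yy v * (cs a (yy v) k / RP x k) = Real.pi * (CC a k / RP x k) := by
  have e : (fun v => yy v * (cs a (yy v) k / RP x k)) = fun v =>
      ∑ l ∈ Finset.range (k + 1),
        ((stirling1Unsigned k l : ℝ) * bernPoly (l + 1) a / RP x k) * (yy v * yy v ^ (l + 1)) := by
    ext v
    rw [cs, Finset.sum_div, Finset.mul_sum]
    refine Finset.sum_congr rfl fun l _ => ?_
    ring
  have hi : ∀ l : ℕ, Integrable fun v => yy v * yy v ^ (l + 1) := by
    intro l
    have := yy_pow_int (l + 1)
    refine this.congr (Filter.Eventually.of_forall fun v => ?_)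
    simp only
    ring
  constructor
  · rw [e]
    exact integrable_finsetSum _ fun l _ => (hi l).const_mul _
  · rw [e, integral_finsetSum _ fun l _ => (hi l).const_mul _, CC, Finset.sum_div, Finset.mul_sum]
    refine Finset.sum_congr rfl fun l _ => ?_
    rw [integral_const_mul, yy_moment]
    ring

lemma main_sum {a : ℝ} (ha0 : 0 ≤ a) (ha1 : a < 1) {x : ℝ} (hx : 0 < x)
    (hT : Summable fun m : ℕ => (x + (1 - a + m)) ^ (-(3 : ℝ) / 2)) :
    HasSum (fun k => CC a k / RP x k)
      (Real.sqrt x / 2 * (∑' m : ℕ, (x + (1 - a + m)) ^ (-(3 : ℝ) / 2)) - 1) ∧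
    Summable (fun k => |CC a k / RP x k|) := by
  obtain ⟨B, hB, hBb⟩ := sum_bound ha0 ha1 hx
  have hpi := Real.pi_pos
  set f : ℕ → ℝ → ℝ := fun k v => yy v * (cs a (yy v) k / RP x k) with hf
  have hfb : ∀ k v, ‖f k v‖ ≤ B k * yy v := by
    intro k v
    have h := hBb (yy v) (yy_pos v).le (yy_le v) k
    simp only [hf]
    rw [norm_mul, Real.norm_of_nonneg (yy_pos v).le, Real.norm_eq_abs, abs_div,
      abs_of_pos (RP_pos hx k), mul_comm]
    exact mul_le_mul_of_nonneg_right h (yy_pos v).le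
  have hfn : ∀ k, ∫ v, ‖f k v‖ ≤ B k * Real.pi := by
    intro k
    rw [← yy_integral, ← integral_const_mul]
    exact integral_mono (f_int a x k).1.norm (yy_int.const_mul _) (hfb k)
  have hfs : Summable fun k => ∫ v, ‖f k v‖ :=
    Summable.of_nonneg_of_le (fun k => integral_nonneg fun v => norm_nonneg _) hfn (hB.mul_right _)
  have H1 := hasSum_integral_of_summable_integral_norm (fun k => (f_int a x k).1) hfs
  set h : ℕ → ℝ → ℝ := fun m v => yy v * (x * yy v / (x + (1 - a + m) * yy v) ^ 2) with hh
  have hc : ∀ m : ℕ, 0 < 1 - a + m := fun m => by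
    have : (0 : ℝ) ≤ m := Nat.cast_nonneg m
    linarith
  have hhn : ∀ m v, 0 ≤ h m v := by
    intro m v
    have := yy_pos v
    have := hc m
    simp only [hh]
    positivity
  set g : ℕ → ℝ → ℝ := fun m => Nat.casesOn m (fun v => - yy v) h with hg
  have hgi : ∀ m, Integrable (g m) := by
    rintro (_ | m)
    · exact yy_int.neg
    · exact ker_int hx (hc m)
  have hgs : Summable fun m => ∫ v, ‖g m v‖ := by
    rw [← summable_nat_add_iff 1]
    have : ∀ m, ∫ v, ‖g (m + 1) v‖ = Real.pi * (Real.sqrt x / 2 * (x + (1 - a + m)) ^ (-(3 : ℝ) / 2)) := by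
      intro m
      rw [← ker hx (hc m)]
      refine integral_congr_ae (Filter.Eventually.of_forall fun v => ?_)
      exact Real.norm_of_nonneg (hhn m v)
    simp_rw [this]
    exact (hT.mul_left _).mul_left _
  have H2 := hasSum_integral_of_summable_integral_norm hgi hgs
  have hEq : ∀ v, ∑' k, f k v = ∑' m, g m v := by
    intro v
    obtain ⟨J, hJ, hJ'⟩ := cs_real ha0 ha1 hx (yy_pos v) (yy_le v)
    have e1 := (hJ.mul_left (yy v)).tsum_eq
    have e2 : HasSum (fun m => g (m + 1) v) (yy v * (1 + J)) := hJ'.mul_left (yy v)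
    have e3 : HasSum (fun m => g m v) (yy v * (1 + J) + (- yy v)) := by
      have := (hasSum_nat_add_iff (f := fun m => g m v) 1).1 e2
      simpa [hg] using this
    rw [e3.tsum_eq]
    simp only [hf]
    rw [e1]
    ring
  have hEq2 : ∫ v, ∑' k, f k v = ∫ v, ∑' m, g m v :=
    integral_congr_ae (Filter.Eventually.of_forall hEq)
  replace H1 : HasSum (fun k => ∫ v, f k v) (∫ v, ∑' m, g m v) := hEq2 ▸ H1
  have H3 : HasSum (fun m => ∫ v, g m v)
      (Real.pi * (Real.sqrt x / 2 * (∑' m : ℕ, (x + (1 - a + m)) ^ (-(3 : ℝ) / 2))) - Real.pi) := by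
    have e2 : HasSum (fun m => ∫ v, g (m + 1) v)
        (Real.pi * (Real.sqrt x / 2 * (∑' m : ℕ, (x + (1 - a + m)) ^ (-(3 : ℝ) / 2)))) := by
      have := (hT.hasSum.mul_left (Real.sqrt x / 2)).mul_left Real.pi
      refine this.congr_fun ?_ 
      intro m
      exact ker hx (hc m)
    have := (hasSum_nat_add_iff (f := fun m => ∫ v, g m v) 1).1 e2
    have e0 : ∫ v, g 0 v = - Real.pi := by
      rw [← yy_integral, ← integral_neg]
      rfl
    rw [Finset.sum_range_one, e0] at this
    exact this
  rw [H2.unique H3] at H1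
  have hfe : ∀ k, ∫ v, f k v = Real.pi * (CC a k / RP x k) := fun k => (f_int a x k).2
  simp_rw [hfe] at H1
  constructor
  · have := H1.mul_left (Real.pi⁻¹)
    simp_rw [inv_mul_cancel_left₀ hpi.ne'] at this
    rw [mul_sub, inv_mul_cancel_left₀ hpi.ne', inv_mul_cancel₀ hpi.ne'] at this
    exact this
  · refine Summable.of_nonneg_of_le (fun k => abs_nonneg _) (fun k => ?_) hB
    have h1 : |∫ v, f k v| ≤ B k * Real.pi :=
      (norm_integral_le_integral_norm (f k)).trans (hfn k)
    rw [hfe, abs_mul, abs_of_pos hpi, mul_comm] at h1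
    exact le_of_mul_le_mul_right h1 hpi

lemma Icc_shift (f : ℕ → ℝ) (n : ℕ) :
    ∑ l ∈ Finset.Icc 1 n, f l = ∑ l ∈ Finset.range n, f (l + 1) := by
  rw [Finset.range_eq_Ico, Finset.sum_Ico_add']
  rfl

lemma st_succ_zero (k : ℕ) : stirling1Unsigned (k + 1) 0 = 0 := by
  induction k with
  | zero => simp [stirling1Unsigned]
  | succ k ih => rw [stirling1Unsigned, ih, mul_zero]

lemma term_eq (a x : ℝ) (k : ℕ) :
    (-1 : ℂ) ^ (k + 1 + 1) *
          (∑ l ∈ Finset.Icc 1 (k + 1),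
            (-1 : ℂ) ^ l * ((Nat.doubleFactorial (2 * l + 1) : ℂ) /
                (2 ^ (l + 1) * ((l + 1).factorial : ℂ))) *
              (S1 (k + 1) l : ℂ) * (bernPoly (l + 1) a : ℂ)) /
        ((x : ℂ) * risingProd (x : ℂ) (k + 1)) = ((-(CC a (k + 1) / RP x (k + 1)) : ℝ) : ℂ) := by
  have hR : (x : ℂ) * risingProd (x : ℂ) (k + 1) = ((RP x (k + 1) : ℝ) : ℂ) := by
    rw [RP, risingProd]; push_cast; rfl
  have hC : CC a (k + 1) = ∑ l ∈ Finset.Icc 1 (k + 1),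
      (stirling1Unsigned (k + 1) l : ℝ) * (qq l * bernPoly (l + 1) a) := by
    rw [CC, Finset.sum_range_succ', st_succ_zero, Nat.cast_zero, zero_mul, add_zero,
      Icc_shift]
  rw [hR, ← neg_div, Complex.ofReal_div, hC]
  congr 1
  push_cast
  rw [Finset.mul_sum, ← Finset.sum_neg_distrib]
  refine Finset.sum_congr rfl fun l _ => ?_
  rw [S1, qq]
  push_cast
  have e : (-1 : ℂ) ^ (k + 1 + 1) * (-1) ^ l * (-1) ^ (k + 1 + l) = -1 := by
    rw [← pow_add, ← pow_add]
    apply Odd.neg_one_pow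
    exact ⟨k + 1 + l, by ring⟩
  linear_combination ((stirling1Unsigned (k + 1) l : ℂ) * ((Nat.doubleFactorial (2 * l + 1) : ℂ) /
                (2 ^ (l + 1) * ((l + 1).factorial : ℂ))) * (bernPoly (l + 1) a : ℂ)) * e

lemma zeta_sum : Summable (fun n : ℕ => ((n : ℝ) + 1) ^ (-(3 : ℝ) / 2)) ∧
    riemannZeta (3 / 2) = ((∑' n : ℕ, ((n : ℝ) + 1) ^ (-(3 : ℝ) / 2) : ℝ) : ℂ) := by
  constructor
  · have := (summable_nat_add_iff 1).2 (Real.summable_nat_rpow (p := -(3 : ℝ) / 2).2 (by norm_num))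
    exact_mod_cast this
  · rw [zeta_eq_tsum_one_div_nat_add_one_cpow (by norm_num), Complex.ofReal_tsum]
    refine tsum_congr fun n => ?_
    rw [Complex.ofReal_cpow (by positivity), one_div, ← Complex.cpow_neg]
    push_cast
    congr 1
    ring

lemma tail (x : ℝ) (hx : 0 < x) :
    Summable (fun m : ℕ => (x + (1 - Int.fract x + m)) ^ (-(3 : ℝ) / 2)) ∧
    (∑ k ∈ Finset.Icc 1 ⌊x⌋₊, (k : ℝ) ^ (-(3 : ℝ) / 2)) +
      ∑' m : ℕ, (x + (1 - Int.fract x + m)) ^ (-(3 : ℝ) / 2) =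
      ∑' n : ℕ, ((n : ℝ) + 1) ^ (-(3 : ℝ) / 2) := by
  have hb : ∀ m : ℕ, x + (1 - Int.fract x + m) = ((m + ⌊x⌋₊ : ℕ) : ℝ) + 1 := by
    intro m
    have h1 := Int.self_sub_fract x
    have h2 : ((⌊x⌋₊ : ℕ) : ℝ) = ((⌊x⌋ : ℤ) : ℝ) := natCast_floor_eq_intCast_floor hx.le
    push_cast
    rw [h2]
    linarith
  simp_rw [hb]
  refine ⟨(summable_nat_add_iff ⌊x⌋₊).2 zeta_sum.1, ?_⟩
  rw [← zeta_sum.1.sum_add_tsum_nat_add ⌊x⌋₊]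
  congr 1
  rw [Icc_shift]
  push_cast
  rfl

end EF

open Finset in
/-- Extended generalized Faulhaber summation formula for the partial sums of `ζ(3/2)`
(summation formula 7, formula (53) of the paper). -/
theorem extended_faulhaber_zeta_three_halves (x : ℝ) (hx : 0 < x) :
    Summable (fun k : ℕ =>
      ‖(-1 : ℂ) ^ (k + 1 + 1) *
          (∑ l ∈ Icc 1 (k + 1),
            (-1 : ℂ) ^ l * ((Nat.doubleFactorial (2 * l + 1) : ℂ) /
                (2 ^ (l + 1) * ((l + 1).factorial : ℂ))) *
              (S1 (k + 1) l : ℂ) * (bernPoly (l + 1) (Int.fract x) : ℂ)) /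
        ((x : ℂ) * risingProd (x : ℂ) (k + 1))‖) ∧
    ((∑ k ∈ Icc 1 ⌊x⌋₊, (k : ℝ) ^ (-(3 : ℝ) / 2) : ℝ) : ℂ) =
      riemannZeta (3 / 2) - 2 / (Real.sqrt x : ℂ) -
        (bernPoly 1 (Int.fract x) : ℂ) / ((x : ℂ) * (Real.sqrt x : ℂ)) +
        2 / (Real.sqrt x : ℂ) *
          ∑' k : ℕ,
            (-1 : ℂ) ^ (k + 1 + 1) *
                (∑ l ∈ Icc 1 (k + 1),
                  (-1 : ℂ) ^ l * ((Nat.doubleFactorial (2 * l + 1) : ℂ) /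
                      (2 ^ (l + 1) * ((l + 1).factorial : ℂ))) *
                    (S1 (k + 1) l : ℂ) * (bernPoly (l + 1) (Int.fract x) : ℂ)) /
              ((x : ℂ) * risingProd (x : ℂ) (k + 1)) := by
  have ha0 := Int.fract_nonneg x
  have ha1 := Int.fract_lt_one x
  obtain ⟨hT, hTe⟩ := EF.tail x hx
  obtain ⟨hS, hA⟩ := EF.main_sum ha0 ha1 hx hT
  have hs0 : 0 < Real.sqrt x := Real.sqrt_pos.2 hx
  have hsq : Real.sqrt x * Real.sqrt x = x := Real.mul_self_sqrt hx.le
  simp_rw [EF.term_eq]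
  constructor
  · have := (summable_nat_add_iff 1).2 hA
    refine this.congr fun k => ?_
    rw [Complex.norm_real, norm_neg, Real.norm_eq_abs]
  · rw [← Complex.ofReal_tsum, EF.zeta_sum.2, ← hTe, tsum_neg]
    have h1 := hS.summable.tsum_eq_zero_add
    rw [hS.tsum_eq] at h1
    have h0 : EF.CC (Int.fract x) 0 / EF.RP x 0 = bernPoly 1 (Int.fract x) / (2 * x) := by
      simp [EF.CC, EF.RP, EF.qq, stirling1Unsigned]
      field_simp
    rw [h0] at h1
    set T := ∑' m : ℕ, (x + (1 - Int.fract x + m)) ^ (-(3 : ℝ) / 2)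
    set U := ∑' b : ℕ, EF.CC (Int.fract x) (b + 1) / EF.RP x (b + 1)
    have hU : U = Real.sqrt x / 2 * T - 1 - bernPoly 1 (Int.fract x) / (2 * x) := by linarith
    rw [hU]
    norm_cast
    have hx' := hx.ne'
    field_simp
    ring
end
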